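/- Consider the stochastic regression model X_{n+1} = θ^t Φ_n + ε_{n+1} with least squares estimator θ̂_n. Let p ≥ 1 be an integer and assume (ε_n) is a martingale difference sequence with E[ε_{n+1}² | F_n] = σ² a.s., sup_{n≥0} E[|ε_{n+1}|^a | F_n] < ∞ a.s. for some a > 2p, the explosion coefficient f_n → 0 a.s., S_n/α_n → L a.s. for some positive random sequence (α_n) increasing to infinity and some symmetric positive definite matrix L, and that for some integer 1 ≤ q ≤ p, E[ε_{n+1}^{2q} | F_n] = σ(2q) a.s. If in addition log d_n = o(n^c) a.s. for some c with 2p/a < c < 1, then the cumulative prediction error C_n(q) = Σ_{k=0}^{n-1} (X_{k+1} − θ̂_k^t Φ_k)^{2q} satisfies |C_n(q)/n − σ(2q)|² = o(n^{c−1}) almost surely. -/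

import Mathlib

open MeasureTheory ProbabilityTheory Filter Finset Matrix Topology Asymptotics

noncomputable section

/-- `S_n = S + ∑_{k=0}^n Φ_k Φ_kᵗ`. -/
def Smat {Ω : Type*} {d : ℕ} (S : Matrix (Fin d) (Fin d) ℝ)
    (Φ : ℕ → Ω → Fin d → ℝ) (n : ℕ) (ω : Ω) : Matrix (Fin d) (Fin d) ℝ :=
  S + ∑ k ∈ Finset.range (n + 1), vecMulVec (Φ k ω) (Φ k ω)

/-- The explosion coefficient `f_n = Φ_nᵗ S_n⁻¹ Φ_n`. -/
def expl {Ω : Type*} {d : ℕ} (S : Matrix (Fin d) (Fin d) ℝ)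
    (Φ : ℕ → Ω → Fin d → ℝ) (n : ℕ) (ω : Ω) : ℝ :=
  Φ n ω ⬝ᵥ ((Smat S Φ n ω)⁻¹ *ᵥ Φ n ω)

/-- The least squares estimator `θ̂_n = S_{n-1}⁻¹ ∑_{k=1}^n Φ_{k-1} X_k`. -/
def lsq {Ω : Type*} {d : ℕ} (S : Matrix (Fin d) (Fin d) ℝ)
    (Φ : ℕ → Ω → Fin d → ℝ) (X : ℕ → Ω → ℝ) (n : ℕ) (ω : Ω) : Fin d → ℝ :=
  (Smat S Φ (n - 1) ω)⁻¹ *ᵥ ∑ k ∈ Finset.Icc 1 n, X k ω • Φ (k - 1) ω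

/-!
Write `t_n = tr S_{n-1}`, `M_n = S_{n-1} (θ̂_n - θ)` and `g_n = |Φ_n|² / t_{n+1}`. The energy
`W_n = |M_n|² / t_n` obeys the exact recursion
`W_{n+1} = (1 - g_n) W_n + 2 u_n ε_{n+1} + g_n ε_{n+1}²` with `u_n² ≤ g_n (1 - g_n) W_n`.
Because `S_n / α_n → L`, `log t_n` and `log d_n` are of the same order, so `∑ g_k = o(n^c)`. Summing
the recursion then gives `∑ g_k W_k = o(n^c)`, and comparing its `q`-th power with an almost
supermartingale gives `∑ g_k W_k^q = o(n^γ)` for every `γ > c`.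

Since `S_n` is well conditioned and `f_n → 0`, the prediction errors `π_k = (θ - θ̂_k)ᵗ Φ_k` satisfy
`π_k² ≤ B g_k W_k` eventually. In `∑ (π_k + ε_{k+1})^{2q} - n σ(2q)` the cross terms are bounded by
`∑ √(g_k W_k) |ε_{k+1}|^{2q-1}`, which is `o(n^{(1+c)/2})` by the Cauchy–Schwarz inequality, the
terms `π_k^{2q}` by the case `γ = (1+c)/2` above, and `∑ (ε_{k+1}^{2q} - σ(2q))` by a strong law for
martingales with `r`-th moments, where `r = min (2, a/2q)` and hence `r (1+c)/2 > 1`. Dividing by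
`n` and squaring gives the rate.
-/

section RealInequalities

lemma rpow_le_one_add_rpow {x s t : ℝ} (hx : 0 ≤ x) (hs : 0 ≤ s) (hst : s ≤ t) :
    x ^ s ≤ 1 + x ^ t := by
  rcases le_total x 1 with h | h
  · linarith [Real.rpow_le_one hx h hs, Real.rpow_nonneg hx t]
  · linarith [Real.rpow_le_rpow_of_exponent_le h hst]

lemma rpow_sub_one_mul_le_rpow {x y r : ℝ} (hr : 1 ≤ r) (hx : 0 ≤ x) (hxy : x ≤ y) :
    x ^ (r - 1) * y ≤ y ^ r := by
  have hy : 0 ≤ y := hx.trans hxy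
  calc x ^ (r - 1) * y ≤ y ^ (r - 1) * y := by gcongr
    _ = y ^ r := by
      nth_rewrite 2 [← Real.rpow_one y]
      rw [← Real.rpow_add_of_nonneg hy (by linarith) zero_le_one, sub_add_cancel]

lemma rpow_sub_one_mul_le_add {x y r : ℝ} (hr : 1 ≤ r) (hx : 0 ≤ x) (hy : 0 ≤ y) :
    x ^ (r - 1) * y ≤ x ^ r + y ^ r := by
  rcases le_total x y with h | h
  · linarith [rpow_sub_one_mul_le_rpow hr hx h, Real.rpow_nonneg hx r]
  · calc x ^ (r - 1) * y ≤ x ^ (r - 1) * x := by gcongr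
      _ ≤ x ^ r := rpow_sub_one_mul_le_rpow hr hx le_rfl
      _ ≤ x ^ r + y ^ r := le_add_of_nonneg_right (Real.rpow_nonneg hy r)

lemma abs_abs_rpow_sub_two_mul_self {r : ℝ} (hr : r ≠ 1) (x : ℝ) :
    |(|x| ^ (r - 2) * x)| = |x| ^ (r - 1) := by
  rcases eq_or_ne x 0 with rfl | hx
  · simp [Real.zero_rpow (sub_ne_zero.2 hr)]
  · rw [abs_mul, Real.abs_rpow_of_nonneg (abs_nonneg x), abs_abs,
      ← Real.rpow_add_one (abs_ne_zero.2 hx)]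
    congr 1; ring

lemma one_add_rpow_le {r t : ℝ} (hr1 : 1 ≤ r) (hr2 : r ≤ 2) (ht : |t| ≤ 1) :
    (1 + t) ^ r ≤ 1 + r * t + |t| ^ r := by
  have ht0 : 0 ≤ 1 + t := by linarith [(abs_le.1 ht).1]
  have hsplit : (1 + t) ^ r ≤ (1 + t) * (1 + t) ^ (r - 1) := by
    rcases ht0.eq_or_lt with h | h
    · simp [← h, Real.zero_rpow (by linarith : r ≠ 0)]
    · rw [mul_comm, ← Real.rpow_add_one h.ne', sub_add_cancel]
  have hbern : (1 + t) ^ (r - 1) ≤ 1 + (r - 1) * t :=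
    rpow_one_add_le_one_add_mul_self (abs_le.1 ht).1 (by linarith) (by linarith)
  have hsq : t ^ 2 ≤ |t| ^ r := by
    rw [← sq_abs, ← Real.rpow_natCast]
    exact Real.rpow_le_rpow_of_exponent_ge_of_imp (abs_nonneg t) ht (by simpa using hr2)
      fun _ h => absurd h (by norm_num)
  nlinarith [mul_le_mul_of_nonneg_left hbern ht0, sq_nonneg t]

lemma abs_sub_rpow_le {s : ℝ} (hs : 0 ≤ s) (x y : ℝ) :
    |x - y| ^ s ≤ 2 ^ s * (|x| ^ s + |y| ^ s) := by
  wlog hyx : |y| ≤ |x| generalizing x y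
  · rw [abs_sub_comm, add_comm]
    exact this y x (le_of_not_ge hyx)
  calc |x - y| ^ s ≤ (2 * |x|) ^ s := by gcongr; linarith [abs_sub x y]
    _ = 2 ^ s * |x| ^ s := Real.mul_rpow zero_le_two (abs_nonneg x)
    _ ≤ 2 ^ s * (|x| ^ s + |y| ^ s) := by
        gcongr
        exact le_add_of_nonneg_right (by positivity)

/- The constant `6` is not optimal (von Bahr and Esseen obtain `2`). What matters is that the
second term is linear in `y`, so that it disappears when `y` is a martingale increment. -/
lemma abs_add_rpow_le {r : ℝ} (hr1 : 1 < r) (hr2 : r ≤ 2) (x y : ℝ) :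
    |x + y| ^ r ≤ |x| ^ r + r * (|x| ^ (r - 2) * x * y) + 6 * |y| ^ r := by
  have hyr : 0 ≤ |y| ^ r := by positivity
  rcases lt_or_ge |x| |y| with h | h
  · have hsum : |x + y| ^ r ≤ 4 * |y| ^ r := by
      calc |x + y| ^ r ≤ (2 * |y|) ^ r := by gcongr; linarith [abs_add_le x y]
        _ = 2 ^ r * |y| ^ r := Real.mul_rpow zero_le_two (abs_nonneg y)
        _ ≤ 2 ^ (2 : ℝ) * |y| ^ r := by gcongr; exact one_le_two
        _ = 4 * |y| ^ r := by norm_num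
    have hlin : |(|x| ^ (r - 2) * x * y)| ≤ |y| ^ r := by
      rw [abs_mul, abs_abs_rpow_sub_two_mul_self hr1.ne']
      exact rpow_sub_one_mul_le_rpow hr1.le (abs_nonneg x) h.le
    have hxr : 0 ≤ |x| ^ r := by positivity
    nlinarith [neg_abs_le (|x| ^ (r - 2) * x * y)]
  · rcases eq_or_ne x 0 with rfl | hx
    · have hy : y = 0 := by simpa using h
      simp [hy, Real.zero_rpow (by linarith : r ≠ 0)]
    have ht : |y / x| ≤ 1 := by rwa [abs_div, div_le_one (abs_pos.2 hx)]
    have hxr : |x| ^ r = |x| ^ (r - 2) * x ^ 2 := by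
      rw [← sq_abs, ← Real.rpow_natCast, ← Real.rpow_add (abs_pos.2 hx)]; norm_num
    calc |x + y| ^ r = |x| ^ r * (1 + y / x) ^ r := by
          have h0 : 0 ≤ 1 + y / x := by linarith [(abs_le.1 ht).1]
          rw [← Real.mul_rpow (abs_nonneg x) h0, ← abs_of_nonneg h0, ← abs_mul,
            mul_add, mul_one, mul_div_cancel₀ _ hx]
      _ ≤ |x| ^ r * (1 + r * (y / x) + |y / x| ^ r) := by
          gcongr; exact one_add_rpow_le hr1.le hr2 ht
      _ = |x| ^ r + r * (|x| ^ (r - 2) * x * y) + |y| ^ r := by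
          have hxy : |x| ^ r * |y / x| ^ r = |y| ^ r := by
            rw [← Real.mul_rpow (abs_nonneg x) (abs_nonneg _), ← abs_mul, mul_div_cancel₀ _ hx]
          rw [mul_add, hxy, hxr]
          field_simp
      _ ≤ |x| ^ r + r * (|x| ^ (r - 2) * x * y) + 6 * |y| ^ r := by linarith

lemma abs_rpow_mul_self_mul_le {r : ℝ} (hr : 1 < r) (x y : ℝ) :
    |(|x| ^ (r - 2) * x * y)| ≤ |x| ^ r + |y| ^ r := by
  rw [abs_mul, abs_abs_rpow_sub_two_mul_self hr.ne']
  exact rpow_sub_one_mul_le_add hr.le (abs_nonneg x) (abs_nonneg y)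

lemma sq_update_nonneg {w g u e : ℝ} (hw : 0 ≤ w) (hg : 0 ≤ g) (hu : u ^ 2 ≤ g * w) :
    0 ≤ w + 2 * u * e + g * e ^ 2 := by
  rcases hg.eq_or_lt with rfl | hg
  · have : u = 0 := by nlinarith [sq_nonneg u]
    simpa [this] using hw
  · refine nonneg_of_mul_nonneg_right (?_ : 0 ≤ g * (w + 2 * u * e + g * e ^ 2)) hg
    nlinarith [sq_nonneg (u + g * e)]

lemma exists_sq_update_pow_le (q : ℕ) : ∃ C : ℝ, 0 ≤ C ∧ ∀ w g u e : ℝ, 0 ≤ w → 0 ≤ g → g ≤ 1 →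
    u ^ 2 ≤ g * w → (w + 2 * u * e + g * e ^ 2) ^ (q + 1) ≤
      w ^ (q + 1) + 2 * (q + 1) * (w ^ q * u * e) + C * (g * (e ^ 2 * (w + e ^ 2) ^ q)) := by
  induction q with
  | zero => exact ⟨1, zero_le_one, fun w g u e _ _ _ _ => by norm_num; linarith⟩
  | succ q ih =>
    obtain ⟨C, hC0, hC⟩ := ih
    refine ⟨1 + 5 * (q + 1) + 2 * C, by positivity, fun w g u e hw hg0 hg1 hu => ?_⟩
    have hue : 2 * u * e ≤ w + e ^ 2 := by nlinarith [sq_nonneg (u - e)]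
    have hs : w + 2 * u * e + g * e ^ 2 ≤ 2 * (w + e ^ 2) := by nlinarith [sq_nonneg e]
    have hs0 := sq_update_nonneg (e := e) hw hg0 hu
    have ih := hC w g u e hw hg0 hg1 hu
    set y := e ^ 2 with hy
    have hy0 : 0 ≤ y := sq_nonneg e
    have hwy : w ^ (q + 1) ≤ (w + y) ^ (q + 1) := by gcongr; linarith
    have hquad : w ^ q * (u ^ 2 * y) ≤ g * (y * (w + y) ^ (q + 1)) :=
      calc w ^ q * (u ^ 2 * y) ≤ w ^ q * (g * w * y) := by gcongr
        _ = g * (y * w ^ (q + 1)) := by ring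
        _ ≤ g * (y * (w + y) ^ (q + 1)) := by gcongr
    have hcross : w ^ q * (2 * u * e) * (g * y) ≤ g * (y * (w + y) ^ (q + 1)) :=
      calc w ^ q * (2 * u * e) * (g * y) ≤ w ^ q * (w + y) * (g * y) := by gcongr
        _ ≤ (w + y) ^ q * (w + y) * (g * y) := by gcongr; linarith
        _ = g * (y * (w + y) ^ (q + 1)) := by ring
    calc (w + 2 * u * e + g * y) ^ (q + 1 + 1)
        = (w + 2 * u * e + g * y) ^ (q + 1) * (w + 2 * u * e + g * y) := pow_succ _ _
      _ ≤ (w ^ (q + 1) + 2 * (q + 1) * (w ^ q * u * e) + C * (g * (y * (w + y) ^ q))) *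
          (w + 2 * u * e + g * y) := by gcongr
      _ = w ^ (q + 2) + 2 * (q + 2) * (w ^ (q + 1) * u * e) + g * (y * w ^ (q + 1)) +
          (q + 1) * (4 * (w ^ q * (u ^ 2 * y)) + w ^ q * (2 * u * e) * (g * y)) +
          C * (g * (y * (w + y) ^ q)) * (w + 2 * u * e + g * y) := by rw [hy]; ring
      _ ≤ w ^ (q + 2) + 2 * (q + 2) * (w ^ (q + 1) * u * e) + g * (y * (w + y) ^ (q + 1)) +
          (q + 1) * (4 * (g * (y * (w + y) ^ (q + 1))) + g * (y * (w + y) ^ (q + 1))) +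
          C * (g * (y * (w + y) ^ q)) * (2 * (w + y)) := by gcongr
      _ = w ^ (q + 1 + 1) + 2 * ((q + 1 : ℕ) + 1) * (w ^ (q + 1) * u * e) +
          (1 + 5 * (q + 1) + 2 * C) * (g * (y * (w + y) ^ (q + 1))) := by push_cast; ring

lemma exists_mul_add_pow_le (q : ℕ) {δ : ℝ} (hδ : 0 < δ) : ∃ C : ℝ, 0 ≤ C ∧
    ∀ w y : ℝ, 0 ≤ w → 0 ≤ y → y * (w + y) ^ q ≤ δ * w ^ (q + 1) + C * y ^ (q + 1) := by
  set η := min 1 (δ / 2 ^ q)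
  have hη : 0 < η := by positivity
  refine ⟨(η⁻¹ + 1) ^ q, by positivity, fun w y hw hy => ?_⟩
  rcases le_total y (η * w) with h | h
  · have hyw : y ≤ w := h.trans (mul_le_of_le_one_left hw (min_le_left _ _))
    calc y * (w + y) ^ q ≤ η * w * (w + w) ^ q := by gcongr
      _ = η * 2 ^ q * w ^ (q + 1) := by rw [← two_mul, mul_pow]; ring
      _ ≤ δ * w ^ (q + 1) := by
        gcongr; exact (le_div_iff₀ (by positivity)).1 (min_le_right _ _)
      _ ≤ δ * w ^ (q + 1) + (η⁻¹ + 1) ^ q * y ^ (q + 1) := le_add_of_nonneg_right (by positivity)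
  · have hwy : w ≤ η⁻¹ * y := by rwa [← div_eq_inv_mul, le_div_iff₀' hη]
    calc y * (w + y) ^ q ≤ y * (η⁻¹ * y + y) ^ q := by gcongr
      _ = (η⁻¹ + 1) ^ q * y ^ (q + 1) := by rw [← add_one_mul, mul_pow]; ring
      _ ≤ δ * w ^ (q + 1) + (η⁻¹ + 1) ^ q * y ^ (q + 1) := le_add_of_nonneg_left (by positivity)

lemma exists_contracted_update_pow_le (q : ℕ) : ∃ C : ℝ, 0 ≤ C ∧ ∀ w g u e : ℝ,
    0 ≤ w → 0 ≤ g → g ≤ 1 → u ^ 2 ≤ g * ((1 - g) * w) →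
    ((1 - g) * w + 2 * u * e + g * e ^ 2) ^ (q + 1) ≤ (1 - g / 2) * w ^ (q + 1) +
      2 * (q + 1) * (((1 - g) * w) ^ q * u * e) + C * (g * (e ^ 2) ^ (q + 1)) := by
  obtain ⟨C, hC0, hC⟩ := exists_sq_update_pow_le q
  have hδ : 0 < 1 / (2 * (C + 1)) := by positivity
  obtain ⟨K, hK0, hK⟩ := exists_mul_add_pow_le q hδ
  refine ⟨C * K, by positivity, fun w g u e hw hg0 hg1 hu => ?_⟩
  have hg1' : 0 ≤ 1 - g := sub_nonneg.2 hg1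
  have hupd := hC _ g u e (mul_nonneg hg1' hw) hg0 hg1 hu
  have hyoung := hK _ (e ^ 2) (mul_nonneg hg1' hw) (sq_nonneg e)
  have hcontr : ((1 - g) * w) ^ (q + 1) ≤ (1 - g) * w ^ (q + 1) := by
    rw [mul_pow]
    gcongr
    exact pow_le_of_le_one hg1' (by linarith) q.succ_ne_zero
  have hpow : ((1 - g) * w) ^ (q + 1) ≤ w ^ (q + 1) := by
    gcongr; exact mul_le_of_le_one_left hw (by linarith)
  have hhalf : C * (1 / (2 * (C + 1))) ≤ 1 / 2 := by
    rw [mul_one_div, div_le_div_iff₀ (by positivity) two_pos]; linarith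
  have hrest : C * (g * (e ^ 2 * ((1 - g) * w + e ^ 2) ^ q)) ≤
      g / 2 * w ^ (q + 1) + C * K * (g * (e ^ 2) ^ (q + 1)) :=
    calc _ ≤ C * (g * (1 / (2 * (C + 1)) * w ^ (q + 1) + K * (e ^ 2) ^ (q + 1))) := by
          gcongr; exact hyoung.trans (by gcongr)
      _ = g * (C * (1 / (2 * (C + 1)))) * w ^ (q + 1) + C * K * (g * (e ^ 2) ^ (q + 1)) := by ring
      _ ≤ g * (1 / 2) * w ^ (q + 1) + C * K * (g * (e ^ 2) ^ (q + 1)) := by gcongr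
      _ = _ := by ring
  linarith

lemma abs_pow_mul_mul_le (q : ℕ) {w v u e : ℝ} (hv : 0 ≤ v) (hvw : v ≤ w) (hu : u ^ 2 ≤ w) :
    |v ^ q * u * e| ≤ w ^ (q + 1) + (e ^ 2) ^ (q + 1) := by
  have hw : 0 ≤ w := hv.trans hvw
  have hue : |u * e| ≤ max w (e ^ 2) := by
    have hmax := And.intro (le_max_left w (e ^ 2)) (le_max_right w (e ^ 2))
    rw [abs_mul]
    nlinarith [sq_nonneg (|u| - |e|), sq_abs u, sq_abs e]
  calc |v ^ q * u * e| = v ^ q * |u * e| := by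
        rw [mul_assoc, abs_mul, abs_of_nonneg (by positivity)]
    _ ≤ max w (e ^ 2) ^ q * max w (e ^ 2) := by gcongr; exact hvw.trans (le_max_left _ _)
    _ = max w (e ^ 2) ^ (q + 1) := (pow_succ _ _).symm
    _ ≤ w ^ (q + 1) + (e ^ 2) ^ (q + 1) := by
      rcases max_choice w (e ^ 2) with h | h <;> rw [h]
      · exact le_add_of_nonneg_right (by positivity)
      · exact le_add_of_nonneg_left (by positivity)

lemma exists_abs_add_pow_sub_pow_le (m : ℕ) : ∃ C : ℝ, 0 ≤ C ∧
    ∀ x y : ℝ, |(x + y) ^ m - y ^ m| ≤ C * (|x| * |y| ^ (m - 1) + |x| ^ m) := by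
  refine ⟨m * 2 ^ (m - 1), by positivity, fun x y => ?_⟩
  rcases m.eq_zero_or_pos with rfl | hm
  · simp
  have hmax : max |x + y| |y| ^ (m - 1) ≤ 2 ^ (m - 1) * (|x| ^ (m - 1) + |y| ^ (m - 1)) :=
    calc max |x + y| |y| ^ (m - 1) ≤ (|x| + |y|) ^ (m - 1) := by
          gcongr
          exact max_le (abs_add_le x y) (le_add_of_nonneg_left (abs_nonneg x))
      _ ≤ 2 ^ (m - 1 - 1) * (|x| ^ (m - 1) + |y| ^ (m - 1)) :=
          add_pow_le (abs_nonneg x) (abs_nonneg y) _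
      _ ≤ _ := by gcongr <;> first | exact one_le_two | omega
  calc |(x + y) ^ m - y ^ m| ≤ |x + y - y| * m * max |x + y| |y| ^ (m - 1) :=
        abs_pow_sub_pow_le _ _ _
    _ ≤ |x| * m * (2 ^ (m - 1) * (|x| ^ (m - 1) + |y| ^ (m - 1))) := by
        rw [add_sub_cancel_right]; gcongr
    _ = m * 2 ^ (m - 1) * (|x| * |y| ^ (m - 1) + |x| ^ m) := by
        rw [← mul_pow_sub_one hm.ne' |x|]; ring

lemma exists_moment_exponent {b c : ℝ} (hc0 : 0 < c) (hc1 : c < 1) (hcb : 1 < c * b) :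
    ∃ r : ℝ, 1 < r ∧ r ≤ 2 ∧ r ≤ b ∧ 1 < (1 + c) / 2 * r := by
  have hb : 1 < b := by nlinarith
  refine ⟨min 2 b, lt_min one_lt_two hb, min_le_left _ _, min_le_right _ _, ?_⟩
  rcases min_choice 2 b with h | h <;> rw [h]
  · linarith
  · exact hcb.trans (by gcongr; linarith)

end RealInequalities

section SequenceAsymptotics

lemma tendsto_natCast_rpow_atTop {γ : ℝ} (hγ : 0 < γ) :
    Tendsto (fun n : ℕ => (n : ℝ) ^ γ) atTop atTop :=
  (tendsto_rpow_atTop hγ).comp tendsto_natCast_atTop_atTop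

lemma isLittleO_const_natCast_rpow {γ : ℝ} (hγ : 0 < γ) (x : ℝ) :
    (fun _ : ℕ => x) =o[atTop] fun n : ℕ => (n : ℝ) ^ γ :=
  isLittleO_const_left.2 (.inr (tendsto_norm_atTop_atTop.comp (tendsto_natCast_rpow_atTop hγ)))

/- Kronecker's lemma, by summation by parts. -/
lemma isLittleO_sum_range_of_tendsto_sum_div {x b : ℕ → ℝ} {T : ℝ} (hb : Monotone b)
    (hb0 : ∀ n, b (n + 1) ≠ 0) (hbtop : Tendsto b atTop atTop)
    (h : Tendsto (fun n => ∑ k ∈ range n, x k / b (k + 1)) atTop (𝓝 T)) :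
    (fun n => ∑ k ∈ range n, x k) =o[atTop] b := by
  set D : ℕ → ℝ := fun n => ∑ k ∈ range n, x k / b (k + 1) - T
  have hD : D =o[atTop] fun _ => (1 : ℝ) := by
    rw [isLittleO_one_iff]
    simpa only [sub_self] using h.sub_const T
  have hparts : ∀ n, ∑ k ∈ range n, x k =
      b n * D n - ∑ k ∈ range n, (b (k + 1) - b k) * D k - b 0 * D 0 := by
    intro n
    induction n with
    | zero => simp
    | succ n ih =>
      have hDn : D (n + 1) = D n + x n / b (n + 1) := by
        simp only [D, sum_range_succ]; ring
      rw [sum_range_succ, ih, sum_range_succ, hDn, mul_add, mul_div_cancel₀ _ (hb0 n)]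
      ring
  have hconst : ∀ C : ℝ, (fun _ : ℕ => C) =o[atTop] b := fun C =>
    isLittleO_const_left.2 (.inr (tendsto_norm_atTop_atTop.comp hbtop))
  have hdiff : (fun n => ∑ k ∈ range n, (b (k + 1) - b k) * D k) =o[atTop] b := by
    have hsum : (fun n => ∑ k ∈ range n, (b (k + 1) - b k) * D k) =o[atTop]
        fun n => ∑ k ∈ range n, (b (k + 1) - b k) := by
      refine IsLittleO.sum_range ?_ (fun k => sub_nonneg.2 (hb k.le_succ)) ?_
      · simpa only [mul_one] using (isBigO_refl (fun k => b (k + 1) - b k) atTop).mul_isLittleO hD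
      · simp_rw [sum_range_sub]
        exact tendsto_atTop_add_const_right _ _ hbtop
    simp_rw [sum_range_sub] at hsum
    exact hsum.trans_isBigO ((isBigO_refl b atTop).sub (hconst _).isBigO)
  simp_rw [hparts]
  refine (IsLittleO.sub ?_ hdiff).sub (hconst _)
  simpa only [mul_one] using (isBigO_refl b atTop).mul_isLittleO hD

lemma isLittleO_sum_range_of_tendsto_sum_div_rpow {x : ℕ → ℝ} {γ T : ℝ} (hγ : 0 < γ)
    (h : Tendsto (fun n => ∑ k ∈ range n, x k / ((k : ℝ) + 1) ^ γ) atTop (𝓝 T)) :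
    (fun n => ∑ k ∈ range n, x k) =o[atTop] fun n : ℕ => (n : ℝ) ^ γ := by
  refine isLittleO_sum_range_of_tendsto_sum_div (T := T) ?_ (fun n => by positivity)
    (tendsto_natCast_rpow_atTop hγ) (by simpa using h)
  intro m n hmn
  dsimp only
  gcongr

lemma summable_div_rpow_of_sum_range_isBigO {g : ℕ → ℝ} {c c' : ℝ} (hg : ∀ k, 0 ≤ g k) (hc : 0 ≤ c)
    (hcc' : c < c') (h : (fun n => ∑ k ∈ range n, g k) =O[atTop] fun n : ℕ => (n : ℝ) ^ c) :
    Summable fun k : ℕ => g k / ((k : ℝ) + 1) ^ c' := by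
  have hIcc : (fun n => ∑ k ∈ Icc 1 n, g (k - 1)) =O[atTop] fun n : ℕ => (n : ℝ) ^ c := by
    refine h.congr_left fun n => ?_
    rw [← Finset.Ico_add_one_right_eq_Icc, sum_Ico_eq_sum_range]
    simp
  have hL : LSeriesSummable (fun n => (g (n - 1) : ℂ)) c' :=
    LSeriesSummable_of_sum_norm_bigO_and_nonneg hIcc (fun n => hg _) hc hcc'
  refine ((summable_nat_add_iff 1).2 hL.norm).congr fun k => ?_
  rw [LSeries.term_of_ne_zero k.succ_ne_zero, norm_div,
    Complex.norm_natCast_cpow_of_pos k.succ_pos]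
  simp [abs_of_nonneg (hg k)]

lemma isLittleO_sum_range_of_eventually_abs_le {x y b : ℕ → ℝ} (hb : Tendsto b atTop atTop)
    (hxy : ∀ᶠ k in atTop, |x k| ≤ y k) (hy : (fun n => ∑ k ∈ range n, y k) =o[atTop] b) :
    (fun n => ∑ k ∈ range n, x k) =o[atTop] b := by
  obtain ⟨N, hN⟩ := eventually_atTop.1 hxy
  have hconst : (fun _ : ℕ => ∑ k ∈ range N, (|x k| - y k)) =o[atTop] b :=
    isLittleO_const_left.2 (.inr (tendsto_norm_atTop_atTop.comp hb))
  refine IsBigO.trans_isLittleO (IsBigO.of_bound' ?_) (hy.add hconst)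
  filter_upwards [eventually_ge_atTop N] with n hn
  have htail : ∑ k ∈ Ico N n, (|x k| - y k) ≤ 0 :=
    sum_nonpos fun k hk => sub_nonpos.2 (hN k (mem_Ico.1 hk).1)
  have hsplit := sum_range_add_sum_Ico (fun k => |x k| - y k) hn
  have hdistrib : ∑ k ∈ range n, (|x k| - y k) = _ := sum_sub_distrib _ _
  calc ‖∑ k ∈ range n, x k‖ ≤ ∑ k ∈ range n, |x k| := abs_sum_le_sum_abs _ _
    _ ≤ ∑ k ∈ range n, y k + ∑ k ∈ range N, (|x k| - y k) := by linarith
    _ ≤ ‖∑ k ∈ range n, y k + ∑ k ∈ range N, (|x k| - y k)‖ := le_abs_self _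

lemma isLittleO_sum_range_sqrt {x : ℕ → ℝ} {c : ℝ} (hx : ∀ k, 0 ≤ x k)
    (h : (fun n => ∑ k ∈ range n, x k) =o[atTop] fun n : ℕ => (n : ℝ) ^ c) :
    (fun n => ∑ k ∈ range n, √(x k)) =o[atTop] fun n : ℕ => (n : ℝ) ^ ((1 + c) / 2) := by
  refine IsLittleO.of_pow (n := 2) ?_ two_ne_zero
  have hCS : ∀ n, (∑ k ∈ range n, √(x k)) ^ 2 ≤ n * ∑ k ∈ range n, x k := fun n => by
    simpa only [Real.sq_sqrt (hx _), card_range] using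
      sq_sum_le_card_mul_sum_sq (s := range n) (f := fun k => √(x k))
  have hprod := (isBigO_refl (fun n : ℕ => (n : ℝ)) atTop).mul_isLittleO h
  refine (IsBigO.of_bound' (.of_forall fun n => ?_)).trans_isLittleO (hprod.congr' .rfl ?_)
  · rw [Pi.pow_apply, Real.norm_of_nonneg (sq_nonneg _)]
    exact (hCS n).trans (le_abs_self _)
  · filter_upwards [eventually_gt_atTop 0] with n hn
    have hn' : (0 : ℝ) < n := Nat.cast_pos.2 hn
    rw [Pi.pow_apply, ← Real.rpow_mul_natCast hn'.le, mul_comm, ← Real.rpow_add_one hn'.ne']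
    congr 1; push_cast; ring

lemma isLittleO_sq_div_sub_of_isLittleO {s : ℕ → ℝ} {m c : ℝ}
    (h : (fun n => s n - n * m) =o[atTop] fun n : ℕ => (n : ℝ) ^ ((1 + c) / 2)) :
    (fun n : ℕ => |s n / n - m| ^ 2) =o[atTop] fun n : ℕ => (n : ℝ) ^ (c - 1) := by
  have hdiv := (h.mul_isBigO (isBigO_refl (fun n : ℕ => (n : ℝ)⁻¹) atTop)).pow two_pos
  refine hdiv.congr' ?_ ?_ <;> filter_upwards [eventually_gt_atTop 0] with n hn <;>
    have hn' : (0 : ℝ) < n := Nat.cast_pos.2 hn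
  · rw [sq_abs]; field_simp
  · rw [← Real.rpow_neg_one, ← Real.rpow_add hn', ← Real.rpow_mul_natCast hn'.le]
    congr 1; push_cast; ring

lemma summable_one_div_natCast_add_one_rpow {s : ℝ} (hs : 1 < s) :
    Summable fun k : ℕ => 1 / ((k : ℝ) + 1) ^ s := by
  refine ((Real.summable_one_div_nat_add_rpow 1 s).2 hs).congr fun k => ?_
  rw [abs_of_pos k.cast_add_one_pos]

lemma isLittleO_sum_add_pow_sub_pow {x y g w : ℕ → ℝ} {q : ℕ} {B γ : ℝ} (hγ : 0 < γ) (hB0 : 0 ≤ B)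
    (hg0 : ∀ k, 0 ≤ g k) (hg1 : ∀ k, g k ≤ 1) (hw : ∀ k, 0 ≤ w k)
    (hx : ∀ᶠ k in atTop, x k ^ 2 ≤ B * (g k * w k))
    (hcross : (fun n => ∑ k ∈ range n, √(g k * w k) * |y k| ^ (2 * q + 1)) =o[atTop]
      fun n : ℕ => (n : ℝ) ^ γ)
    (hpow : (fun n => ∑ k ∈ range n, g k * w k ^ (q + 1)) =o[atTop] fun n : ℕ => (n : ℝ) ^ γ) :
    (fun n => ∑ k ∈ range n, ((x k + y k) ^ (2 * (q + 1)) - y k ^ (2 * (q + 1)))) =o[atTop]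
      fun n : ℕ => (n : ℝ) ^ γ := by
  obtain ⟨C, hC0, hC⟩ := exists_abs_add_pow_sub_pow_le (2 * (q + 1))
  have hbound : (fun n => ∑ k ∈ range n, C * (√B * (√(g k * w k) * |y k| ^ (2 * q + 1)) +
      B ^ (q + 1) * (g k * w k ^ (q + 1)))) =o[atTop] fun n : ℕ => (n : ℝ) ^ γ := by
    simp_rw [← mul_sum, sum_add_distrib, ← mul_sum]
    exact ((hcross.const_mul_left _).add (hpow.const_mul_left _)).const_mul_left C
  refine isLittleO_sum_range_of_eventually_abs_le (tendsto_natCast_rpow_atTop hγ) ?_ hbound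
  filter_upwards [hx] with k hk
  have hlin : |x k| ≤ √B * √(g k * w k) := by
    rw [← Real.sqrt_mul hB0]
    exact Real.abs_le_sqrt hk
  have htop : |x k| ^ (2 * (q + 1)) ≤ B ^ (q + 1) * (g k * w k ^ (q + 1)) :=
    calc |x k| ^ (2 * (q + 1)) = (x k ^ 2) ^ (q + 1) := by rw [pow_mul, sq_abs]
      _ ≤ (B * (g k * w k)) ^ (q + 1) := by gcongr
      _ = B ^ (q + 1) * (g k ^ (q + 1) * w k ^ (q + 1)) := by rw [mul_pow, mul_pow]
      _ ≤ B ^ (q + 1) * (g k * w k ^ (q + 1)) := by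
        have := hw k
        gcongr
        exact pow_le_of_le_one (hg0 k) (hg1 k) q.succ_ne_zero
  calc |(x k + y k) ^ (2 * (q + 1)) - y k ^ (2 * (q + 1))|
      ≤ C * (|x k| * |y k| ^ (2 * q + 1) + |x k| ^ (2 * (q + 1))) := hC (x k) (y k)
    _ ≤ C * (√B * √(g k * w k) * |y k| ^ (2 * q + 1) +
          B ^ (q + 1) * (g k * w k ^ (q + 1))) := by gcongr
    _ = _ := by rw [mul_assoc √B]

end SequenceAsymptotics

section Localisation

variable {Ω : Type*} {m0 : MeasurableSpace Ω} {μ : Measure Ω} {F : Filtration ℕ m0}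
  {x : ℕ → Ω → ℝ}

/-- The event `x_0 + ⋯ + x_n ≤ N`. For a nonnegative adapted `x` these events localise: they
decrease in `n`, the terms `x_n` restricted to them add up to at most `N`, and where `∑ x_n`
converges all of them hold for some `N`. -/
def partialSumLE (x : ℕ → Ω → ℝ) (N n : ℕ) : Set Ω :=
  {ω | ∑ k ∈ range (n + 1), x k ω ≤ N}

lemma measurableSet_partialSumLE (hx : ∀ n, StronglyMeasurable[F n] (x n)) (N n : ℕ) :
    MeasurableSet[F n] (partialSumLE x N n) := by
  have hsum : Measurable[F n] fun ω => ∑ k ∈ range (n + 1), x k ω :=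
    Finset.measurable_fun_sum _ fun k hk =>
      (hx k).measurable.mono (F.mono (mem_range_succ_iff.1 hk)) le_rfl
  exact measurableSet_le hsum measurable_const

lemma antitone_partialSumLE (hx : ∀ n ω, 0 ≤ x n ω) (N : ℕ) : Antitone (partialSumLE x N) :=
  fun _ _ hmn _ hω =>
    (sum_le_sum_of_subset_of_nonneg (range_mono (Nat.succ_le_succ hmn))
      fun k _ _ => hx k _).trans hω

lemma le_of_mem_partialSumLE (hx : ∀ n ω, 0 ≤ x n ω) {N n : ℕ} {ω : Ω}
    (hω : ω ∈ partialSumLE x N n) : x n ω ≤ N :=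
  (single_le_sum (f := fun k => x k ω) (fun k _ => hx k ω) (self_mem_range_succ n)).trans hω

lemma sum_indicator_partialSumLE_le (hx : ∀ n ω, 0 ≤ x n ω) (N n : ℕ) (ω : Ω) :
    ∑ k ∈ range n, (partialSumLE x N k).indicator (x k) ω ≤ N := by
  induction n with
  | zero => simp
  | succ n ih =>
    by_cases hω : ω ∈ partialSumLE x N n
    · exact (sum_le_sum fun k _ => Set.indicator_le_self' (fun ω _ => hx k ω) ω).trans hω
    · rwa [sum_range_succ, Set.indicator_of_notMem hω, add_zero]

lemma ae_of_forall_partialSumLE (hx : ∀ n ω, 0 ≤ x n ω)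
    (hsum : ∀ᵐ ω ∂μ, Summable fun n => x n ω) {P : Ω → Prop}
    (hP : ∀ N : ℕ, ∀ᵐ ω ∂μ, (∀ n, ω ∈ partialSumLE x N n) → P ω) : ∀ᵐ ω ∂μ, P ω := by
  filter_upwards [hsum, ae_all_iff.2 hP] with ω hω hPω
  obtain ⟨N, hN⟩ := exists_nat_ge (∑' n, x n ω)
  exact hPω N fun n => (hω.sum_le_tsum _ fun k _ => hx k ω).trans hN

lemma integrableOn_partialSumLE [IsFiniteMeasure μ] (hx : ∀ n ω, 0 ≤ x n ω)
    (hxm : ∀ n, StronglyMeasurable[F n] (x n)) (N n : ℕ) :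
    IntegrableOn (x n) (partialSumLE x N n) μ := by
  refine Measure.integrableOn_of_bounded (M := N) (measure_ne_top _ _)
    ((hxm n).mono (F.le n)).aestronglyMeasurable ?_
  refine (ae_restrict_iff' (F.le n _ (measurableSet_partialSumLE hxm N n))).2 (ae_of_all _ ?_)
  intro ω hω
  rw [Real.norm_of_nonneg (hx n ω)]
  exact le_of_mem_partialSumLE hx hω

lemma sum_setIntegral_partialSumLE_le [IsFiniteMeasure μ] (hx : ∀ n ω, 0 ≤ x n ω)
    (hxm : ∀ n, StronglyMeasurable[F n] (x n)) (N n : ℕ) :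
    ∑ k ∈ range n, ∫ ω in partialSumLE x N k, x k ω ∂μ ≤ μ.real Set.univ * N := by
  have hE : ∀ k, MeasurableSet (partialSumLE x N k) := fun k =>
    F.le k _ (measurableSet_partialSumLE hxm N k)
  have hint : ∀ k, Integrable ((partialSumLE x N k).indicator (x k)) μ := fun k =>
    (integrable_indicator_iff (hE k)).2 (integrableOn_partialSumLE hx hxm N k)
  calc ∑ k ∈ range n, ∫ ω in partialSumLE x N k, x k ω ∂μ
      = ∫ ω, ∑ k ∈ range n, (partialSumLE x N k).indicator (x k) ω ∂μ := by
        rw [integral_finsetSum _ fun k _ => hint k]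
        exact sum_congr rfl fun k _ => (integral_indicator (hE k)).symm
    _ ≤ ∫ _, (N : ℝ) ∂μ := integral_mono (integrable_finsetSum _ fun k _ => hint k)
        (integrable_const _) (sum_indicator_partialSumLE_le hx N n)
    _ = μ.real Set.univ * N := by simp

end Localisation

section MartingaleConvergence

variable {Ω : Type*} {m m0 : MeasurableSpace Ω} {μ : Measure Ω} {F : Filtration ℕ m0}

lemma ae_summable_of_sum_integral_le {h : ℕ → Ω → ℝ} (h0 : ∀ n ω, 0 ≤ h n ω)
    (hint : ∀ n, Integrable (h n) μ) {B : ℝ} (hB : ∀ n, ∑ k ∈ range n, ∫ ω, h k ω ∂μ ≤ B) :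
    ∀ᵐ ω ∂μ, Summable fun n => h n ω := by
  have hmeas : ∀ n, AEMeasurable (fun ω => ENNReal.ofReal (h n ω)) μ := fun n =>
    (hint n).aemeasurable.ennreal_ofReal
  have hsum : Summable fun n => ∫ ω, h n ω ∂μ :=
    summable_of_sum_range_le (fun n => integral_nonneg (h0 n)) hB
  have hfin : ∫⁻ ω, ∑' n, ENNReal.ofReal (h n ω) ∂μ ≠ ⊤ := by
    simp_rw [lintegral_tsum hmeas,
      ← ofReal_integral_eq_lintegral_ofReal (hint _) (ae_of_all _ (h0 _)),
      ← ENNReal.ofReal_tsum_of_nonneg (fun n => integral_nonneg (h0 n)) hsum]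
    exact ENNReal.ofReal_ne_top
  filter_upwards [ae_lt_top' (AEMeasurable.tsum hmeas) hfin] with ω hω
  simpa only [ENNReal.toReal_ofReal (h0 _ ω)] using ENNReal.summable_toReal hω.ne

lemma integral_mul_eq_integral_mul_condExp [IsFiniteMeasure μ] (hm : m ≤ m0) {f g : Ω → ℝ}
    (hf : StronglyMeasurable[m] f) (hfg : Integrable (f * g) μ) (hg : Integrable g μ) :
    ∫ ω, f ω * g ω ∂μ = ∫ ω, f ω * (μ[g | m]) ω ∂μ := by
  change ∫ ω, (f * g) ω ∂μ = _
  rw [← integral_condExp hm]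
  exact integral_congr_ae (condExp_mul_of_stronglyMeasurable_left hf hfg hg)

/- The Robbins–Siegmund lemma. -/
theorem ae_summable_of_condExp_le_add_sub [IsFiniteMeasure μ] {V A B : ℕ → Ω → ℝ}
    (hV : ∀ n ω, 0 ≤ V n ω) (hVint : ∀ n, Integrable (V n) μ)
    (hA : ∀ n ω, 0 ≤ A n ω) (hAmeas : ∀ n, StronglyMeasurable[F n] (A n))
    (hB : ∀ n ω, 0 ≤ B n ω) (hBint : ∀ n, Integrable (B n) μ)
    (hstep : ∀ n, μ[V (n + 1) | F n] ≤ᵐ[μ] fun ω => V n ω + A n ω - B n ω)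
    (hAsum : ∀ᵐ ω ∂μ, Summable fun n => A n ω) :
    ∀ᵐ ω ∂μ, Summable fun n => B n ω := by
  refine ae_of_forall_partialSumLE hA hAsum fun N => ?_
  set E : ℕ → Set Ω := partialSumLE A N
  have hE : ∀ n, MeasurableSet[F n] (E n) := measurableSet_partialSumLE hAmeas N
  have hE' : ∀ n, MeasurableSet (E n) := fun n => F.le n _ (hE n)
  have hAint : ∀ n, IntegrableOn (A n) (E n) μ := integrableOn_partialSumLE hA hAmeas N
  have hone : ∀ n, ∫ ω in E n, V (n + 1) ω ∂μ ≤
      ∫ ω in E n, V n ω ∂μ + ∫ ω in E n, A n ω ∂μ - ∫ ω in E n, B n ω ∂μ := by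
    intro n
    have hVA : IntegrableOn (fun ω => V n ω + A n ω) (E n) μ := (hVint n).integrableOn.add (hAint n)
    rw [← setIntegral_condExp (F.le n) (hVint (n + 1)) (hE n),
      ← integral_add (hVint n).integrableOn (hAint n), ← integral_sub hVA (hBint n).integrableOn]
    exact setIntegral_mono_ae integrable_condExp.integrableOn (hVA.sub (hBint n).integrableOn)
      (hstep n)
  have htelescope : ∀ n, ∫ ω in E n, V n ω ∂μ + ∑ k ∈ range n, ∫ ω in E k, B k ω ∂μ ≤
      ∫ ω in E 0, V 0 ω ∂μ + ∑ k ∈ range n, ∫ ω in E k, A k ω ∂μ := by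
    intro n
    induction n with
    | zero => simp
    | succ n ih =>
      have hanti : ∫ ω in E (n + 1), V (n + 1) ω ∂μ ≤ ∫ ω in E n, V (n + 1) ω ∂μ :=
        setIntegral_mono_set (hVint _).integrableOn (ae_of_all _ (hV _))
          (antitone_partialSumLE hA N n.le_succ).eventuallyLE
      simp only [sum_range_succ]
      linarith [hone n]
  have hsum : ∀ᵐ ω ∂μ, Summable fun n => (E n).indicator (B n) ω := by
    refine ae_summable_of_sum_integral_le (B := ∫ ω in E 0, V 0 ω ∂μ + μ.real Set.univ * N)
      (fun n ω => Set.indicator_nonneg (fun ω _ => hB n ω) ω)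
      (fun n => (hBint n).indicator (hE' n)) fun n => ?_
    simp_rw [integral_indicator (hE' _)]
    linarith [htelescope n, sum_setIntegral_partialSumLE_le (μ := μ) hA hAmeas N n,
      setIntegral_nonneg (μ := μ) (hE' n) fun ω _ => hV n ω]
  filter_upwards [hsum] with ω hω hmem
  simpa only [Set.indicator_of_mem (hmem _)] using hω

lemma integrable_of_abs_rpow [IsFiniteMeasure μ] {f : Ω → ℝ} {s t : ℝ} (hs : 0 ≤ s) (hst : s ≤ t)
    (hf : AEStronglyMeasurable f μ) (h : Integrable (fun ω => |f ω| ^ t) μ) :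
    Integrable (fun ω => |f ω| ^ s) μ := by
  refine ((integrable_const 1).add h).mono' ?_ (ae_of_all _ fun ω => ?_)
  · exact (hf.aemeasurable.abs.pow_const s).aestronglyMeasurable
  · rw [Real.norm_of_nonneg (by positivity)]
    exact rpow_le_one_add_rpow (abs_nonneg _) hs hst

lemma integrable_of_integrable_abs_rpow [IsFiniteMeasure μ] {f : Ω → ℝ} {r : ℝ} (hr : 1 ≤ r)
    (hf : AEStronglyMeasurable f μ) (h : Integrable (fun ω => |f ω| ^ r) μ) : Integrable f μ := by
  have habs := integrable_of_abs_rpow zero_le_one hr hf h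
  simp only [Real.rpow_one] at habs
  exact (integrable_norm_iff hf).1 habs

variable {r : ℝ}

lemma integrable_abs_rpow_mul_mul {X D : Ω → ℝ} (hr : 1 < r) (hX : AEStronglyMeasurable X μ)
    (hD : AEStronglyMeasurable D μ) (hXr : Integrable (fun ω => |X ω| ^ r) μ)
    (hDr : Integrable (fun ω => |D ω| ^ r) μ) :
    Integrable (fun ω => |X ω| ^ (r - 2) * X ω * D ω) μ := by
  refine (hXr.add hDr).mono' ?_ (ae_of_all _ fun ω => abs_rpow_mul_self_mul_le hr _ _)
  exact (((hX.aemeasurable.abs.pow_const _).mul hX.aemeasurable).mul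
    hD.aemeasurable).aestronglyMeasurable

lemma integrable_abs_add_rpow {X D : Ω → ℝ} (hr1 : 1 < r) (hr2 : r ≤ 2)
    (hX : AEStronglyMeasurable X μ) (hD : AEStronglyMeasurable D μ)
    (hXr : Integrable (fun ω => |X ω| ^ r) μ) (hDr : Integrable (fun ω => |D ω| ^ r) μ) :
    Integrable (fun ω => |X ω + D ω| ^ r) μ := by
  refine ((hXr.add ((integrable_abs_rpow_mul_mul hr1 hX hD hXr hDr).const_mul r)).add
    (hDr.const_mul 6)).mono' ?_ (ae_of_all _ fun ω => ?_)
  · exact ((hX.add hD).aemeasurable.abs.pow_const r).aestronglyMeasurable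
  · rw [Real.norm_of_nonneg (by positivity)]
    exact abs_add_rpow_le hr1 hr2 _ _

lemma integral_abs_add_rpow_le [IsFiniteMeasure μ] (hm : m ≤ m0) {X D : Ω → ℝ} (hr1 : 1 < r)
    (hr2 : r ≤ 2) (hX : StronglyMeasurable[m] X) (hD : AEStronglyMeasurable D μ)
    (hXr : Integrable (fun ω => |X ω| ^ r) μ) (hDr : Integrable (fun ω => |D ω| ^ r) μ)
    (hD0 : μ[D | m] =ᵐ[μ] 0) :
    ∫ ω, |X ω + D ω| ^ r ∂μ ≤ ∫ ω, |X ω| ^ r ∂μ + 6 * ∫ ω, |D ω| ^ r ∂μ := by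
  have hX' : AEStronglyMeasurable X μ := (hX.mono hm).aestronglyMeasurable
  have hcross := integrable_abs_rpow_mul_mul hr1 hX' hD hXr hDr
  have hmain : Integrable (fun ω => |X ω| ^ r + r * (|X ω| ^ (r - 2) * X ω * D ω)) μ :=
    hXr.add (hcross.const_mul r)
  have hcross0 : ∫ ω, |X ω| ^ (r - 2) * X ω * D ω ∂μ = 0 := by
    have hmeas : Measurable fun x : ℝ => |x| ^ (r - 2) * x := by fun_prop
    rw [integral_mul_eq_integral_mul_condExp hm (f := fun ω => |X ω| ^ (r - 2) * X ω)
      (hmeas.comp hX.measurable).stronglyMeasurable hcross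
      (integrable_of_integrable_abs_rpow hr1.le hD hDr)]
    refine integral_eq_zero_of_ae ?_
    filter_upwards [hD0] with ω hω
    rw [hω, Pi.zero_apply, mul_zero]
  calc ∫ ω, |X ω + D ω| ^ r ∂μ
      ≤ ∫ ω, (|X ω| ^ r + r * (|X ω| ^ (r - 2) * X ω * D ω) + 6 * |D ω| ^ r) ∂μ :=
        integral_mono (integrable_abs_add_rpow hr1 hr2 hX' hD hXr hDr)
          (hmain.add (hDr.const_mul 6)) fun ω => abs_add_rpow_le hr1 hr2 _ _
    _ = ∫ ω, |X ω| ^ r ∂μ + 6 * ∫ ω, |D ω| ^ r ∂μ := by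
        rw [integral_add hmain (hDr.const_mul 6), integral_add hXr (hcross.const_mul r),
          integral_const_mul, integral_const_mul, hcross0, mul_zero, add_zero]

lemma integrable_abs_sum_rpow (hr1 : 1 < r) (hr2 : r ≤ 2) {D : ℕ → Ω → ℝ}
    (hD : ∀ n, AEStronglyMeasurable (D n) μ) (hDr : ∀ n, Integrable (fun ω => |D n ω| ^ r) μ)
    (n : ℕ) : Integrable (fun ω => |∑ k ∈ range n, D k ω| ^ r) μ := by
  induction n with
  | zero => simp [Real.zero_rpow (zero_lt_one.trans hr1).ne']
  | succ n ih =>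
    simpa only [sum_range_succ] using integrable_abs_add_rpow hr1 hr2
      (Finset.aestronglyMeasurable_fun_sum _ fun k _ => hD k) (hD n) ih (hDr n)

/- The von Bahr–Esseen inequality. -/
lemma integral_abs_sum_rpow_le [IsFiniteMeasure μ] (hr1 : 1 < r) (hr2 : r ≤ 2) {D : ℕ → Ω → ℝ}
    (hD : ∀ n, StronglyMeasurable[F (n + 1)] (D n))
    (hDr : ∀ n, Integrable (fun ω => |D n ω| ^ r) μ) (hD0 : ∀ n, μ[D n | F n] =ᵐ[μ] 0) (n : ℕ) :
    ∫ ω, |∑ k ∈ range n, D k ω| ^ r ∂μ ≤ 6 * ∑ k ∈ range n, ∫ ω, |D k ω| ^ r ∂μ := by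
  have hDmeas : ∀ n, AEStronglyMeasurable (D n) μ := fun n =>
    ((hD n).mono (F.le _)).aestronglyMeasurable
  induction n with
  | zero => simp [Real.zero_rpow (zero_lt_one.trans hr1).ne']
  | succ n ih =>
    have hnext := integral_abs_add_rpow_le (F.le n) hr1 hr2
      (Finset.stronglyMeasurable_fun_sum _ fun k hk => (hD k).mono (F.mono (mem_range.1 hk)))
      (hDmeas n) (integrable_abs_sum_rpow hr1 hr2 hDmeas hDr n) (hDr n) (hD0 n)
    simp only [sum_range_succ]
    linarith

theorem ae_exists_tendsto_sum_of_sum_integral_rpow_le [IsFiniteMeasure μ] (hr1 : 1 < r)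
    (hr2 : r ≤ 2) {D : ℕ → Ω → ℝ} (hD : ∀ n, StronglyMeasurable[F (n + 1)] (D n))
    (hDr : ∀ n, Integrable (fun ω => |D n ω| ^ r) μ) (hD0 : ∀ n, μ[D n | F n] =ᵐ[μ] 0) {B : ℝ}
    (hB : ∀ n, ∑ k ∈ range n, ∫ ω, |D k ω| ^ r ∂μ ≤ B) :
    ∀ᵐ ω ∂μ, ∃ T, Tendsto (fun n => ∑ k ∈ range n, D k ω) atTop (𝓝 T) := by
  set M : ℕ → Ω → ℝ := fun n ω => ∑ k ∈ range n, D k ω with hM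
  have hDmeas : ∀ n, AEStronglyMeasurable (D n) μ := fun n =>
    ((hD n).mono (F.le _)).aestronglyMeasurable
  have hMmeas : ∀ n, StronglyMeasurable[F n] (M n) := fun n =>
    Finset.stronglyMeasurable_fun_sum _ fun k hk => (hD k).mono (F.mono (mem_range.1 hk))
  have hDint : ∀ n, Integrable (D n) μ := fun n =>
    integrable_of_integrable_abs_rpow hr1.le (hDmeas n) (hDr n)
  have hMint : ∀ n, Integrable (M n) μ := fun n => integrable_finsetSum _ fun k _ => hDint k
  have hMr : ∀ n, Integrable (fun ω => |M n ω| ^ r) μ :=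
    integrable_abs_sum_rpow hr1 hr2 hDmeas hDr
  have hmart : Martingale M F μ := by
    refine martingale_of_condExp_sub_eq_zero_nat hMmeas hMint fun n => ?_
    have hdiff : M (n + 1) - M n = D n := by ext ω; simp [hM, sum_range_succ]
    rw [hdiff]
    exact hD0 n
  refine hmart.submartingale.exists_ae_tendsto_of_bdd (R := (μ.real Set.univ + 6 * B).toNNReal)
    fun n => ?_
  rw [eLpNorm_one_eq_lintegral_enorm, ← ofReal_integral_norm_eq_lintegral_enorm (hMint n)]
  refine ENNReal.ofReal_le_ofReal ?_
  calc ∫ ω, ‖M n ω‖ ∂μ ≤ ∫ ω, (1 + |M n ω| ^ r) ∂μ :=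
        integral_mono (hMint n).norm ((integrable_const 1).add (hMr n)) fun ω => by
          simpa using rpow_le_one_add_rpow (abs_nonneg (M n ω)) zero_le_one hr1.le
    _ = μ.real Set.univ + ∫ ω, |M n ω| ^ r ∂μ := by
        rw [integral_add (integrable_const 1) (hMr n)]; simp
    _ ≤ μ.real Set.univ + 6 * B := by
        linarith [integral_abs_sum_rpow_le hr1 hr2 hD hDr hD0 n, hB n]

lemma integrable_abs_mul_rpow {V ξ : Ω → ℝ} {K : ℝ} (hV : AEStronglyMeasurable V μ)
    (hVK : ∀ ω, |V ω| ^ r ≤ K) (hξr : Integrable (fun ω => |ξ ω| ^ r) μ) :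
    Integrable (fun ω => |V ω * ξ ω| ^ r) μ := by
  simp_rw [abs_mul, Real.mul_rpow (abs_nonneg _) (abs_nonneg _)]
  refine hξr.bdd_mul (c := K) (hV.aemeasurable.abs.pow_const r).aestronglyMeasurable
    (ae_of_all _ fun ω => ?_)
  rw [Real.norm_of_nonneg (by positivity)]
  exact hVK ω

lemma integral_abs_mul_rpow_le [IsFiniteMeasure μ] (hm : m ≤ m0) {V ξ x : Ω → ℝ} {K : ℝ}
    (hV : StronglyMeasurable[m] V) (hVK : ∀ ω, |V ω| ^ r ≤ K)
    (hξr : Integrable (fun ω => |ξ ω| ^ r) μ) (hx : Integrable x μ)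
    (hle : ∀ ω, |V ω| ^ r * (μ[fun ω => |ξ ω| ^ r | m]) ω ≤ x ω) :
    ∫ ω, |V ω * ξ ω| ^ r ∂μ ≤ ∫ ω, x ω ∂μ := by
  have hrpow : Measurable fun x : ℝ => |x| ^ r := by fun_prop
  have hVr : StronglyMeasurable[m] fun ω => |V ω| ^ r :=
    (hrpow.comp hV.measurable).stronglyMeasurable
  have hprod := integrable_abs_mul_rpow (hV.mono hm).aestronglyMeasurable hVK hξr
  simp_rw [abs_mul, Real.mul_rpow (abs_nonneg _) (abs_nonneg _)] at hprod ⊢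
  rw [integral_mul_eq_integral_mul_condExp hm hVr hprod hξr]
  refine integral_mono (integrable_condExp.bdd_mul (c := K) (hVr.mono hm).aestronglyMeasurable
    (ae_of_all _ fun ω => ?_)) hx hle
  rw [Real.norm_of_nonneg (by positivity)]
  exact hVK ω

lemma ae_exists_tendsto_sum_mul_of_sum_integral_rpow_le [IsFiniteMeasure μ] {V ξ : ℕ → Ω → ℝ}
    {K B : ℝ} (hr1 : 1 < r) (hr2 : r ≤ 2) (hξ : ∀ n, StronglyMeasurable[F (n + 1)] (ξ n))
    (hξr : ∀ n, Integrable (fun ω => |ξ n ω| ^ r) μ) (hξ0 : ∀ n, μ[ξ n | F n] =ᵐ[μ] 0)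
    (hV : ∀ n, StronglyMeasurable[F n] (V n)) (hVK : ∀ n ω, |V n ω| ^ r ≤ K)
    (hB : ∀ n, ∑ k ∈ range n, ∫ ω, |V k ω * ξ k ω| ^ r ∂μ ≤ B) :
    ∀ᵐ ω ∂μ, ∃ T, Tendsto (fun n => ∑ k ∈ range n, V k ω * ξ k ω) atTop (𝓝 T) := by
  have hξm : ∀ n, AEStronglyMeasurable (ξ n) μ := fun n =>
    ((hξ n).mono (F.le _)).aestronglyMeasurable
  have hVm : ∀ n, AEStronglyMeasurable (V n) μ := fun n =>
    ((hV n).mono (F.le _)).aestronglyMeasurable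
  have hVξr : ∀ n, Integrable (fun ω => |V n ω * ξ n ω| ^ r) μ := fun n =>
    integrable_abs_mul_rpow (hVm n) (hVK n) (hξr n)
  refine ae_exists_tendsto_sum_of_sum_integral_rpow_le hr1 hr2
    (fun n => ((hV n).mono (F.mono n.le_succ)).mul (hξ n)) hVξr (fun n => ?_) hB
  filter_upwards [condExp_mul_of_stronglyMeasurable_left (hV n)
    (integrable_of_integrable_abs_rpow hr1.le ((hVm n).mul (hξm n)) (hVξr n))
    (integrable_of_integrable_abs_rpow hr1.le (hξm n) (hξr n)), hξ0 n] with ω hω hω0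
  exact hω.trans (by rw [Pi.mul_apply, hω0, Pi.zero_apply, mul_zero])

lemma ae_summable_rpow_mul_one_add_abs_condExp {U ξ : ℕ → Ω → ℝ}
    (hκ : ∀ᵐ ω ∂μ, ∃ K : ℝ, ∀ n, (μ[fun ω => |ξ n ω| ^ r | F n]) ω ≤ K)
    (hUr : ∀ᵐ ω ∂μ, Summable fun n => |U n ω| ^ r) :
    ∀ᵐ ω ∂μ, Summable fun n => |U n ω| ^ r * (1 + |(μ[fun ω => |ξ n ω| ^ r | F n]) ω|) := by
  filter_upwards [hUr, hκ, ae_all_iff.2 fun n => condExp_nonneg (m := F n)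
    (ae_of_all μ fun ω => by positivity : 0 ≤ᵐ[μ] fun ω => |ξ n ω| ^ r)] with ω hω ⟨K, hK⟩ hκ0
  refine .of_nonneg_of_le (fun n => by positivity) (fun n => ?_) (hω.mul_right (1 + K))
  gcongr
  exact (abs_of_nonneg (hκ0 n)).trans_le (hK n)

theorem ae_exists_tendsto_sum_mul_of_summable_rpow [IsFiniteMeasure μ] {U ξ : ℕ → Ω → ℝ}
    (hr1 : 1 < r) (hr2 : r ≤ 2) (hξ : ∀ n, StronglyMeasurable[F (n + 1)] (ξ n))
    (hξr : ∀ n, Integrable (fun ω => |ξ n ω| ^ r) μ) (hξ0 : ∀ n, μ[ξ n | F n] =ᵐ[μ] 0)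
    (hκ : ∀ᵐ ω ∂μ, ∃ K : ℝ, ∀ n, (μ[fun ω => |ξ n ω| ^ r | F n]) ω ≤ K)
    (hU : ∀ n, StronglyMeasurable[F n] (U n)) (hUr : ∀ᵐ ω ∂μ, Summable fun n => |U n ω| ^ r) :
    ∀ᵐ ω ∂μ, ∃ T, Tendsto (fun n => ∑ k ∈ range n, U k ω * ξ k ω) atTop (𝓝 T) := by
  have hr0 : r ≠ 0 := (zero_lt_one.trans hr1).ne'
  set κ : ℕ → Ω → ℝ := fun n => μ[fun ω => |ξ n ω| ^ r | F n]
  set x : ℕ → Ω → ℝ := fun n ω => |U n ω| ^ r * (1 + |κ n ω|) with hx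
  have hx0 : ∀ n ω, 0 ≤ x n ω := fun n ω => by positivity
  have hxmeas : ∀ n, StronglyMeasurable[F n] (x n) := fun n =>
    have hpair : Measurable fun p : ℝ × ℝ => |p.1| ^ r * (1 + |p.2|) := by fun_prop
    (hpair.comp ((hU n).measurable.prodMk
      (stronglyMeasurable_condExp (m := F n)).measurable)).stronglyMeasurable
  refine ae_of_forall_partialSumLE hx0 (ae_summable_rpow_mul_one_add_abs_condExp hκ hUr) fun N => ?_
  set E : ℕ → Set Ω := partialSumLE x N
  have hE : ∀ n, MeasurableSet[F n] (E n) := measurableSet_partialSumLE hxmeas N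
  have hV : ∀ n, StronglyMeasurable[F n] ((E n).indicator (U n)) := fun n => (hU n).indicator (hE n)
  have hVN : ∀ n ω, |(E n).indicator (U n) ω| ^ r ≤ N := by
    intro n ω
    by_cases hω : ω ∈ E n
    · rw [Set.indicator_of_mem hω]
      exact (le_mul_of_one_le_right (by positivity) (by linarith [abs_nonneg (κ n ω)])).trans
        (le_of_mem_partialSumLE hx0 hω)
    · simp [hω, hr0]
  have hVξ : ∀ n, ∫ ω, |(E n).indicator (U n) ω * ξ n ω| ^ r ∂μ ≤ ∫ ω in E n, x n ω ∂μ := by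
    intro n
    rw [← integral_indicator (F.le n _ (hE n))]
    refine integral_abs_mul_rpow_le (F.le n) (hV n) (hVN n) (hξr n)
      ((integrable_indicator_iff (F.le n _ (hE n))).2 (integrableOn_partialSumLE hx0 hxmeas N n))
      fun ω => ?_
    by_cases hω : ω ∈ E n
    · simp only [Set.indicator_of_mem hω, hx]
      gcongr
      exact (le_abs_self (κ n ω)).trans (le_add_of_nonneg_left zero_le_one)
    · simp [hω, hr0]
  filter_upwards [ae_exists_tendsto_sum_mul_of_sum_integral_rpow_le hr1 hr2 hξ hξr hξ0 hV hVN
    fun n => (sum_le_sum fun k _ => hVξ k).trans (sum_setIntegral_partialSumLE_le hx0 hxmeas N n)]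
    with ω hω hmem
  simpa only [Set.indicator_of_mem (hmem _)] using hω

end MartingaleConvergence

section Noise

variable {Ω : Type*} {m0 : MeasurableSpace Ω} {μ : Measure Ω} {F : Filtration ℕ m0}
  {ξ η U : ℕ → Ω → ℝ} {r s t γ : ℝ}

/-- A noise sequence with almost surely bounded conditional absolute moments of order `s`. The
indices are shifted so that `ξ n` is revealed at time `n + 1` and conditioned on time `n`. -/
structure HasBddCondMoment (F : Filtration ℕ m0) (μ : Measure Ω) (ξ : ℕ → Ω → ℝ) (s : ℝ) :
    Prop where
  stronglyMeasurable : ∀ n, StronglyMeasurable[F (n + 1)] (ξ n)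
  integrable_abs_rpow : ∀ n, Integrable (fun ω => |ξ n ω| ^ s) μ
  ae_condExp_le : ∀ᵐ ω ∂μ, ∃ K : ℝ, ∀ n, (μ[fun ω => |ξ n ω| ^ s | F n]) ω ≤ K

namespace HasBddCondMoment

lemma aestronglyMeasurable (hξ : HasBddCondMoment F μ ξ s) (n : ℕ) :
    AEStronglyMeasurable (ξ n) μ :=
  ((hξ.stronglyMeasurable n).mono (F.le _)).aestronglyMeasurable

lemma integrable [IsFiniteMeasure μ] (hξ : HasBddCondMoment F μ ξ s) (hs : 1 ≤ s) (n : ℕ) :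
    Integrable (ξ n) μ :=
  integrable_of_integrable_abs_rpow hs (hξ.aestronglyMeasurable n) (hξ.integrable_abs_rpow n)

lemma of_abs_eq_abs_pow [IsFiniteMeasure μ] (hξ : HasBddCondMoment F μ ξ s) {j : ℕ} (ht : 0 ≤ t)
    (hjt : j * t ≤ s) (hη : ∀ n, StronglyMeasurable[F (n + 1)] (η n))
    (hηξ : ∀ n ω, |η n ω| = |ξ n ω| ^ j) : HasBddCondMoment F μ η t := by
  have hpow : ∀ n ω, |η n ω| ^ t = |ξ n ω| ^ (j * t) := fun n ω => by
    rw [hηξ, ← Real.rpow_natCast, ← Real.rpow_mul (abs_nonneg _)]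
  have hint : ∀ n, Integrable (fun ω => |η n ω| ^ t) μ := fun n => by
    simp_rw [hpow]
    exact integrable_of_abs_rpow (by positivity) hjt (hξ.aestronglyMeasurable n)
      (hξ.integrable_abs_rpow n)
  have hle : ∀ n, μ[fun ω => |η n ω| ^ t | F n] ≤ᵐ[μ]
      fun ω => 1 + (μ[fun ω => |ξ n ω| ^ s | F n]) ω := fun n => by
    refine (condExp_mono (hint n) ((integrable_const 1).add (hξ.integrable_abs_rpow n))
      (ae_of_all _ fun ω => (hpow n ω).trans_le
        (rpow_le_one_add_rpow (abs_nonneg _) (by positivity) hjt))).trans_eq ?_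
    filter_upwards [condExp_add (integrable_const (1 : ℝ)) (hξ.integrable_abs_rpow n) (F n)]
      with ω hω
    rw [hω, Pi.add_apply, condExp_const (F.le n)]
  refine ⟨hη, hint, ?_⟩
  filter_upwards [ae_all_iff.2 hle, hξ.ae_condExp_le] with ω hω ⟨K, hK⟩
  exact ⟨1 + K, fun n => (hω n).trans (by linarith [hK n])⟩

lemma ae_abs_condExp_rpow_le (hξ : HasBddCondMoment F μ ξ s) (hs : 1 ≤ s) (n : ℕ) :
    ∀ᵐ ω ∂μ, |(μ[ξ n | F n]) ω| ^ s ≤ (μ[fun ω => |ξ n ω| ^ s | F n]) ω := by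
  have := hξ.integrable_abs_rpow n
  simp_rw [← Real.norm_eq_abs] at this ⊢
  exact Integrable.norm_condExp_rpow_le (f := ξ n) hs this

lemma ae_abs_condExp_le (hξ : HasBddCondMoment F μ ξ s) (hs : 1 ≤ s) :
    ∀ᵐ ω ∂μ, ∃ K : ℝ, ∀ n, |(μ[ξ n | F n]) ω| ≤ K := by
  filter_upwards [hξ.ae_condExp_le, ae_all_iff.2 (hξ.ae_abs_condExp_rpow_le hs)] with ω ⟨K, hK⟩ hω
  refine ⟨1 + K, fun n => ?_⟩
  calc |(μ[ξ n | F n]) ω| = |(μ[ξ n | F n]) ω| ^ (1 : ℝ) := (Real.rpow_one _).symm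
    _ ≤ 1 + |(μ[ξ n | F n]) ω| ^ s := rpow_le_one_add_rpow (abs_nonneg _) zero_le_one hs
    _ ≤ 1 + K := by gcongr; exact (hω n).trans (hK n)

lemma sub_condExp [IsFiniteMeasure μ] (hξ : HasBddCondMoment F μ ξ s) (hs : 1 ≤ s) :
    HasBddCondMoment F μ (fun n ω => ξ n ω - (μ[ξ n | F n]) ω) s := by
  set κ : ℕ → Ω → ℝ := fun n => μ[fun ω => |ξ n ω| ^ s | F n]
  have hmeas : ∀ n, StronglyMeasurable[F (n + 1)] fun ω => ξ n ω - (μ[ξ n | F n]) ω := fun n =>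
    (hξ.stronglyMeasurable n).sub (stronglyMeasurable_condExp.mono (F.mono n.le_succ))
  have hle : ∀ n, ∀ᵐ ω ∂μ,
      |ξ n ω - (μ[ξ n | F n]) ω| ^ s ≤ 2 ^ s * (|ξ n ω| ^ s + κ n ω) := fun n => by
    filter_upwards [hξ.ae_abs_condExp_rpow_le hs n] with ω hω
    exact (abs_sub_rpow_le (zero_le_one.trans hs) _ _).trans (by gcongr)
  have hdom : ∀ n, Integrable (fun ω => 2 ^ s * (|ξ n ω| ^ s + κ n ω)) μ := fun n =>
    ((hξ.integrable_abs_rpow n).add integrable_condExp).const_mul _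
  have hrpow : Measurable fun x : ℝ => |x| ^ s := by fun_prop
  have hint : ∀ n, Integrable (fun ω => |ξ n ω - (μ[ξ n | F n]) ω| ^ s) μ := fun n => by
    refine (hdom n).mono' (hrpow.comp ((hmeas n).mono
      (F.le _)).measurable).aestronglyMeasurable ?_
    filter_upwards [hle n] with ω hω
    rwa [Real.norm_of_nonneg (by positivity)]
  have hcond : ∀ n, μ[fun ω => |ξ n ω - (μ[ξ n | F n]) ω| ^ s | F n] ≤ᵐ[μ]
      fun ω => 2 ^ s * (κ n ω + κ n ω) := fun n => by
    refine (condExp_mono (hint n) (hdom n) (hle n)).trans_eq ?_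
    filter_upwards [condExp_smul (μ := μ) ((2 : ℝ) ^ s) (fun ω => |ξ n ω| ^ s + κ n ω) (F n),
      condExp_add (hξ.integrable_abs_rpow n) (integrable_condExp (f := fun ω => |ξ n ω| ^ s)) (F n)]
      with ω hω₁ hω₂
    refine hω₁.trans (congrArg (2 ^ s * ·) (hω₂.trans ?_))
    rw [Pi.add_apply, condExp_of_stronglyMeasurable (F.le n) stronglyMeasurable_condExp
      integrable_condExp]
  refine ⟨hmeas, hint, ?_⟩
  filter_upwards [ae_all_iff.2 hcond, hξ.ae_condExp_le] with ω hω ⟨K, hK⟩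
  exact ⟨2 ^ s * (K + K), fun n => (hω n).trans (by gcongr <;> exact hK n)⟩

lemma isLittleO_sum_mul [IsFiniteMeasure μ] (hξ : HasBddCondMoment F μ ξ r) (hr1 : 1 < r)
    (hr2 : r ≤ 2) (hξ0 : ∀ n, μ[ξ n | F n] =ᵐ[μ] 0) (hU : ∀ n, StronglyMeasurable[F n] (U n))
    (hγ : 0 < γ) (hUsum : ∀ᵐ ω ∂μ, Summable fun k => |U k ω| ^ r / ((k : ℝ) + 1) ^ (γ * r)) :
    ∀ᵐ ω ∂μ, (fun n => ∑ k ∈ range n, U k ω * ξ k ω) =o[atTop] fun n : ℕ => (n : ℝ) ^ γ := by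
  have hpow : ∀ (k : ℕ) ω,
      |U k ω / ((k : ℝ) + 1) ^ γ| ^ r = |U k ω| ^ r / ((k : ℝ) + 1) ^ (γ * r) := fun k ω => by
    have hk : (0 : ℝ) < (k : ℝ) + 1 := k.cast_add_one_pos
    rw [abs_div, abs_of_pos (Real.rpow_pos_of_pos hk γ), Real.div_rpow (abs_nonneg _)
      (by positivity), ← Real.rpow_mul hk.le]
  filter_upwards [ae_exists_tendsto_sum_mul_of_summable_rpow
    (U := fun k ω => U k ω / ((k : ℝ) + 1) ^ γ) hr1 hr2 hξ.stronglyMeasurable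
    hξ.integrable_abs_rpow hξ0 hξ.ae_condExp_le (fun n => (hU n).div stronglyMeasurable_const)
    (by simpa only [hpow] using hUsum)] with ω ⟨T, hT⟩
  exact isLittleO_sum_range_of_tendsto_sum_div_rpow hγ
    (by simpa only [div_mul_eq_mul_div] using hT)

lemma isLittleO_sum_mul_sub_condExp [IsFiniteMeasure μ] (hξ : HasBddCondMoment F μ ξ r)
    (hr1 : 1 < r) (hr2 : r ≤ 2) (hU : ∀ n, StronglyMeasurable[F n] (U n)) (hγ : 0 < γ)
    (hUsum : ∀ᵐ ω ∂μ, Summable fun k => |U k ω| ^ r / ((k : ℝ) + 1) ^ (γ * r)) :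
    ∀ᵐ ω ∂μ, (fun n => ∑ k ∈ range n, U k ω * (ξ k ω - (μ[ξ k | F k]) ω)) =o[atTop]
      fun n : ℕ => (n : ℝ) ^ γ := by
  refine (hξ.sub_condExp hr1.le).isLittleO_sum_mul hr1 hr2 (fun n => ?_) hU hγ hUsum
  refine (condExp_sub (hξ.integrable hr1.le n) integrable_condExp (F n)).trans ?_
  rw [condExp_of_stronglyMeasurable (F.le n) stronglyMeasurable_condExp integrable_condExp,
    sub_self]

lemma isLittleO_sum_mul_of_nonneg [IsFiniteMeasure μ] (hξ : HasBddCondMoment F μ ξ r)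
    (hr1 : 1 < r) (hr2 : r ≤ 2) (hU : ∀ n, StronglyMeasurable[F n] (U n))
    (hU0 : ∀ n ω, 0 ≤ U n ω) (hγ : 0 < γ)
    (hUsum : ∀ᵐ ω ∂μ, Summable fun k => |U k ω| ^ r / ((k : ℝ) + 1) ^ (γ * r))
    (hUo : ∀ᵐ ω ∂μ, (fun n => ∑ k ∈ range n, U k ω) =o[atTop] fun n : ℕ => (n : ℝ) ^ γ) :
    ∀ᵐ ω ∂μ, (fun n => ∑ k ∈ range n, U k ω * ξ k ω) =o[atTop] fun n : ℕ => (n : ℝ) ^ γ := by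
  filter_upwards [hξ.isLittleO_sum_mul_sub_condExp hr1 hr2 hU hγ hUsum,
    hξ.ae_abs_condExp_le hr1.le, hUo] with ω hmart ⟨K, hK⟩ hω
  have hmean : (fun n => ∑ k ∈ range n, U k ω * (μ[ξ k | F k]) ω) =o[atTop]
      fun n : ℕ => (n : ℝ) ^ γ := by
    refine isLittleO_sum_range_of_eventually_abs_le (tendsto_natCast_rpow_atTop hγ)
      (.of_forall fun k => ?_) (y := fun k => K * U k ω) (by
        simpa only [mul_sum] using hω.const_mul_left K)
    rw [abs_mul, abs_of_nonneg (hU0 k ω), mul_comm K]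
    exact mul_le_mul_of_nonneg_left (hK k) (hU0 k ω)
  refine (hmart.add hmean).congr_left fun n => ?_
  rw [← sum_add_distrib]
  exact sum_congr rfl fun k _ => by ring

lemma isLittleO_sum_sub_condExp [IsFiniteMeasure μ] (hξ : HasBddCondMoment F μ ξ r) (hr1 : 1 < r)
    (hr2 : r ≤ 2) (hγ : 0 < γ) (hγr : 1 < γ * r) :
    ∀ᵐ ω ∂μ, (fun n => ∑ k ∈ range n, (ξ k ω - (μ[ξ k | F k]) ω)) =o[atTop]
      fun n : ℕ => (n : ℝ) ^ γ := by
  simpa using hξ.isLittleO_sum_mul_sub_condExp (U := fun _ _ => 1) hr1 hr2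
    (fun _ => stronglyMeasurable_const) hγ
    (ae_of_all _ fun _ => by simpa using summable_one_div_natCast_add_one_rpow hγr)

end HasBddCondMoment

end Noise

section EnergyRecursion

variable {Ω : Type*} {m0 : MeasurableSpace Ω} {μ : Measure Ω} {F : Filtration ℕ m0}
  {e g u W η x : ℕ → Ω → ℝ} {a c r γ : ℝ} {q : ℕ}

/-- The recursion satisfied by the normalised energy `W` of the estimation error of a recursive
least squares scheme driven by the noise `e`: each step dissipates the fraction `g` (the gain) of
the energy and feeds noise back through the coupling `u`. The indices are shifted as in
`HasBddCondMoment`. -/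
structure EnergyRecursion (F : Filtration ℕ m0) (e g u W : ℕ → Ω → ℝ) : Prop where
  stronglyMeasurable_gain : ∀ n, StronglyMeasurable[F n] (g n)
  stronglyMeasurable_coupling : ∀ n, StronglyMeasurable[F n] (u n)
  stronglyMeasurable_energy : ∀ n, StronglyMeasurable[F n] (W n)
  gain_nonneg : ∀ n ω, 0 ≤ g n ω
  gain_le_one : ∀ n ω, g n ω ≤ 1
  energy_nonneg : ∀ n ω, 0 ≤ W n ω
  coupling_sq_le : ∀ n ω, u n ω ^ 2 ≤ g n ω * ((1 - g n ω) * W n ω)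
  energy_succ : ∀ n ω, W (n + 1) ω = (1 - g n ω) * W n ω + 2 * u n ω * e n ω + g n ω * e n ω ^ 2

namespace EnergyRecursion

lemma retained_nonneg (h : EnergyRecursion F e g u W) (n : ℕ) (ω : Ω) :
    0 ≤ (1 - g n ω) * W n ω :=
  mul_nonneg (sub_nonneg.2 (h.gain_le_one n ω)) (h.energy_nonneg n ω)

lemma retained_le_energy (h : EnergyRecursion F e g u W) (n : ℕ) (ω : Ω) :
    (1 - g n ω) * W n ω ≤ W n ω :=
  mul_le_of_le_one_left (h.energy_nonneg n ω) (sub_le_self 1 (h.gain_nonneg n ω))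

lemma gain_mul_energy_nonneg (h : EnergyRecursion F e g u W) (n : ℕ) (ω : Ω) :
    0 ≤ g n ω * W n ω :=
  mul_nonneg (h.gain_nonneg n ω) (h.energy_nonneg n ω)

lemma coupling_sq_le_gain_mul_energy (h : EnergyRecursion F e g u W) (n : ℕ) (ω : Ω) :
    u n ω ^ 2 ≤ g n ω * W n ω :=
  (h.coupling_sq_le n ω).trans
    (mul_le_mul_of_nonneg_left (h.retained_le_energy n ω) (h.gain_nonneg n ω))

lemma coupling_sq_le_energy (h : EnergyRecursion F e g u W) (n : ℕ) (ω : Ω) :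
    u n ω ^ 2 ≤ W n ω :=
  (h.coupling_sq_le_gain_mul_energy n ω).trans
    (mul_le_of_le_one_left (h.energy_nonneg n ω) (h.gain_le_one n ω))

lemma abs_retained_pow_mul_coupling_mul_le (h : EnergyRecursion F e g u W) (q n : ℕ) (ω : Ω) :
    |((1 - g n ω) * W n ω) ^ q * u n ω * e n ω| ≤ W n ω ^ (q + 1) + (e n ω ^ 2) ^ (q + 1) :=
  abs_pow_mul_mul_le q (h.retained_nonneg n ω) (h.retained_le_energy n ω)
    (h.coupling_sq_le_energy n ω)

lemma exists_energy_succ_pow_le (h : EnergyRecursion F e g u W) (q : ℕ) :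
    ∃ C : ℝ, 0 ≤ C ∧ ∀ n ω, W (n + 1) ω ^ (q + 1) ≤
      (1 - g n ω / 2) * W n ω ^ (q + 1)
        + 2 * (q + 1) * (((1 - g n ω) * W n ω) ^ q * u n ω * e n ω)
        + C * (g n ω * (e n ω ^ 2) ^ (q + 1)) := by
  obtain ⟨C, hC0, hC⟩ := exists_contracted_update_pow_le q
  refine ⟨C, hC0, fun n ω => ?_⟩
  rw [h.energy_succ n ω]
  exact hC _ _ _ _ (h.energy_nonneg n ω) (h.gain_nonneg n ω) (h.gain_le_one n ω)
    (h.coupling_sq_le n ω)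

lemma aestronglyMeasurable_energy_pow (h : EnergyRecursion F e g u W) (q n : ℕ) :
    AEStronglyMeasurable (fun ω => W n ω ^ q) μ :=
  (((h.stronglyMeasurable_energy n).pow q).mono (F.le n)).aestronglyMeasurable

lemma stronglyMeasurable_retained_pow_mul_coupling (h : EnergyRecursion F e g u W) (q n : ℕ) :
    StronglyMeasurable[F n] fun ω => ((1 - g n ω) * W n ω) ^ q * u n ω :=
  (((stronglyMeasurable_const.sub (h.stronglyMeasurable_gain n)).mul
    (h.stronglyMeasurable_energy n)).pow q).mul (h.stronglyMeasurable_coupling n)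

lemma integrable_energy_pow (h : EnergyRecursion F e g u W)
    (hW0 : Integrable (fun ω => W 0 ω ^ (q + 1)) μ)
    (he : ∀ n, Integrable (fun ω => (e n ω ^ 2) ^ (q + 1)) μ) (n : ℕ) :
    Integrable (fun ω => W n ω ^ (q + 1)) μ := by
  obtain ⟨C, hC0, hC⟩ := h.exists_energy_succ_pow_le q
  induction n with
  | zero => exact hW0
  | succ n ih =>
    refine Integrable.mono' ((ih.add ((ih.add (he n)).const_mul (2 * (q + 1)))).add
      ((he n).const_mul C)) (h.aestronglyMeasurable_energy_pow (q + 1) (n + 1))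
      (ae_of_all _ fun ω => ?_)
    rw [Real.norm_of_nonneg (pow_nonneg (h.energy_nonneg _ ω) _)]
    refine (hC n ω).trans (add_le_add_three ?_ ?_ ?_)
    · exact mul_le_of_le_one_left (pow_nonneg (h.energy_nonneg n ω) _)
        (by linarith [h.gain_nonneg n ω])
    · exact mul_le_mul_of_nonneg_left ((le_abs_self _).trans
        (h.abs_retained_pow_mul_coupling_mul_le q n ω)) (by positivity)
    · exact mul_le_mul_of_nonneg_left (mul_le_of_le_one_left (by positivity)
        (h.gain_le_one n ω)) hC0

lemma integrable_retained_pow_mul_coupling_mul (h : EnergyRecursion F e g u W)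
    {n : ℕ} (hem : AEStronglyMeasurable (e n) μ) (hW : Integrable (fun ω => W n ω ^ (q + 1)) μ)
    (he : Integrable (fun ω => (e n ω ^ 2) ^ (q + 1)) μ) :
    Integrable (fun ω => ((1 - g n ω) * W n ω) ^ q * u n ω * e n ω) μ :=
  (hW.add he).mono' (((h.stronglyMeasurable_retained_pow_mul_coupling q n).mono
    (F.le n)).aestronglyMeasurable.mul hem)
    (ae_of_all _ (h.abs_retained_pow_mul_coupling_mul_le q n))

lemma exists_condExp_energy_succ_pow_le [IsFiniteMeasure μ] (h : EnergyRecursion F e g u W)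
    (hei : ∀ n, Integrable (e n) μ) (he0 : ∀ n, μ[e n | F n] =ᵐ[μ] 0)
    (he : ∀ n, Integrable (fun ω => (e n ω ^ 2) ^ (q + 1)) μ)
    (hW : ∀ n, Integrable (fun ω => W n ω ^ (q + 1)) μ) :
    ∃ C : ℝ, 0 ≤ C ∧ ∀ n, μ[fun ω => W (n + 1) ω ^ (q + 1) | F n] ≤ᵐ[μ] fun ω =>
      (1 - g n ω / 2) * W n ω ^ (q + 1)
        + C * (g n ω * (μ[fun ω => (e n ω ^ 2) ^ (q + 1) | F n]) ω) := by
  obtain ⟨C, hC0, hC⟩ := h.exists_energy_succ_pow_le q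
  refine ⟨C, hC0, fun n => ?_⟩
  have hgm := h.stronglyMeasurable_gain n
  set P : Ω → ℝ := fun ω => (1 - g n ω / 2) * W n ω ^ (q + 1)
  set D : Ω → ℝ := fun ω => ((1 - g n ω) * W n ω) ^ q * u n ω
  set Y : Ω → ℝ := fun ω => (e n ω ^ 2) ^ (q + 1)
  have hfactor : StronglyMeasurable[F n] fun ω => 1 - g n ω / 2 :=
    stronglyMeasurable_const.sub (hgm.div stronglyMeasurable_const)
  have hPm : StronglyMeasurable[F n] P := hfactor.mul ((h.stronglyMeasurable_energy n).pow _)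
  have hDm : StronglyMeasurable[F n] D := h.stronglyMeasurable_retained_pow_mul_coupling q n
  have hPi : Integrable P μ := (hW n).bdd_mul (c := 1)
    (hfactor.mono (F.le n)).aestronglyMeasurable
    (ae_of_all _ fun ω => abs_le.2 ⟨by linarith [h.gain_le_one n ω], by
      linarith [h.gain_nonneg n ω]⟩)
  have hDi : Integrable (D * e n) μ := h.integrable_retained_pow_mul_coupling_mul
    (hei n).aestronglyMeasurable (hW n) (he n)
  have hgYi : Integrable (g n * Y) μ := (he n).bdd_mul (c := 1)
    (hgm.mono (F.le n)).aestronglyMeasurable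
    (ae_of_all _ fun ω => abs_le.2 ⟨by linarith [h.gain_nonneg n ω], h.gain_le_one n ω⟩)
  have hP : μ[P | F n] = P := condExp_of_stronglyMeasurable (F.le n) hPm hPi
  refine (condExp_mono (hW (n + 1)) ((hPi.add (hDi.smul (2 * ((q : ℝ) + 1)))).add (hgYi.smul C))
    (ae_of_all _ (hC n))).trans_eq ?_
  filter_upwards [condExp_add (hPi.add (hDi.smul (2 * ((q : ℝ) + 1)))) (hgYi.smul C) (F n),
    condExp_add hPi (hDi.smul (2 * ((q : ℝ) + 1))) (F n),
    condExp_smul (μ := μ) (2 * ((q : ℝ) + 1)) (D * e n) (F n),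
    condExp_smul (μ := μ) C (g n * Y) (F n),
    condExp_mul_of_stronglyMeasurable_left hDm hDi (hei n),
    condExp_mul_of_stronglyMeasurable_left hgm hgYi (he n), he0 n] with ω h₁ h₂ h₃ h₄ h₅ h₆ h₇
  simp only [h₁, h₂, h₃, h₄, h₅, h₆, h₇, hP, P, Pi.add_apply, Pi.smul_apply, Pi.mul_apply,
    Pi.zero_apply, smul_eq_mul, mul_zero, add_zero]

lemma integrable_gain_mul_energy_pow (h : EnergyRecursion F e g u W) {n : ℕ}
    (hW : Integrable (fun ω => W n ω ^ q) μ) : Integrable (fun ω => g n ω * W n ω ^ q) μ :=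
  hW.bdd_mul (c := 1) ((h.stronglyMeasurable_gain n).mono (F.le n)).aestronglyMeasurable
    (ae_of_all _ fun ω => abs_le.2 ⟨by linarith [h.gain_nonneg n ω], h.gain_le_one n ω⟩)

lemma exists_condExp_mul_energy_succ_pow_le [IsFiniteMeasure μ] (h : EnergyRecursion F e g u W)
    (hei : ∀ n, Integrable (e n) μ) (he0 : ∀ n, μ[e n | F n] =ᵐ[μ] 0)
    (he : ∀ n, Integrable (fun ω => (e n ω ^ 2) ^ (q + 1)) μ)
    (hW : ∀ n, Integrable (fun ω => W n ω ^ (q + 1)) μ) {w : ℕ → ℝ} (hw0 : ∀ n, 0 ≤ w n)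
    (hw : Antitone w) :
    ∃ C : ℝ, 0 ≤ C ∧ ∀ n, μ[fun ω => w (n + 1) * W (n + 1) ω ^ (q + 1) | F n] ≤ᵐ[μ] fun ω =>
      w n * W n ω ^ (q + 1)
        + w n * (C * (g n ω * |(μ[fun ω => (e n ω ^ 2) ^ (q + 1) | F n]) ω|))
        - w n / 2 * (g n ω * W n ω ^ (q + 1)) := by
  obtain ⟨C, hC0, hC⟩ := h.exists_condExp_energy_succ_pow_le hei he0 he hW
  refine ⟨C, hC0, fun n => ?_⟩
  have hdecr : μ[fun ω => w (n + 1) * W (n + 1) ω ^ (q + 1) | F n] ≤ᵐ[μ]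
      μ[fun ω => w n * W (n + 1) ω ^ (q + 1) | F n] :=
    condExp_mono ((hW (n + 1)).const_mul _) ((hW (n + 1)).const_mul _) (ae_of_all _ fun ω =>
      mul_le_mul_of_nonneg_right (hw n.le_succ) (pow_nonneg (h.energy_nonneg _ ω) _))
  filter_upwards [hdecr, hC n,
    condExp_smul (μ := μ) (w n) (fun ω => W (n + 1) ω ^ (q + 1)) (F n)] with ω hω₁ hω₂ hω₃
  set κ : ℝ := (μ[fun ω => (e n ω ^ 2) ^ (q + 1) | F n]) ω
  calc (μ[fun ω => w (n + 1) * W (n + 1) ω ^ (q + 1) | F n]) ω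
      ≤ w n * (μ[fun ω => W (n + 1) ω ^ (q + 1) | F n]) ω := hω₁.trans_eq hω₃
    _ ≤ w n * ((1 - g n ω / 2) * W n ω ^ (q + 1) + C * (g n ω * |κ|)) := by
        have := h.gain_nonneg n ω
        refine mul_le_mul_of_nonneg_left (hω₂.trans ?_) (hw0 n)
        gcongr
        exact le_abs_self _
    _ = _ := by ring

theorem ae_summable_mul_gain_mul_energy_pow [IsFiniteMeasure μ] (h : EnergyRecursion F e g u W)
    (hei : ∀ n, Integrable (e n) μ) (he0 : ∀ n, μ[e n | F n] =ᵐ[μ] 0)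
    (he : HasBddCondMoment F μ (fun n ω => (e n ω ^ 2) ^ (q + 1)) 1)
    (hW0 : Integrable (fun ω => W 0 ω ^ (q + 1)) μ) {w : ℕ → ℝ} (hw0 : ∀ n, 0 ≤ w n)
    (hw : Antitone w) (hwg : ∀ᵐ ω ∂μ, Summable fun n => w n * g n ω) :
    ∀ᵐ ω ∂μ, Summable fun n => w n * (g n ω * W n ω ^ (q + 1)) := by
  have hei' : ∀ n, Integrable (fun ω => (e n ω ^ 2) ^ (q + 1)) μ := he.integrable le_rfl
  have hWi := h.integrable_energy_pow hW0 hei'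
  obtain ⟨C, hC0, hC⟩ := h.exists_condExp_mul_energy_succ_pow_le hei he0 hei' hWi hw0 hw
  set κ : ℕ → Ω → ℝ := fun n => μ[fun ω => (e n ω ^ 2) ^ (q + 1) | F n]
  have hκm : ∀ n, StronglyMeasurable[F n] fun ω => |κ n ω| := fun n =>
    (stronglyMeasurable_condExp (f := fun ω => (e n ω ^ 2) ^ (q + 1))).norm
  have hWq0 : ∀ n ω, 0 ≤ W n ω ^ (q + 1) := fun n ω => pow_nonneg (h.energy_nonneg n ω) _
  have hA0 : ∀ n ω, 0 ≤ w n * (C * (g n ω * |κ n ω|)) := fun n ω =>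
    mul_nonneg (hw0 n) (mul_nonneg hC0 (mul_nonneg (h.gain_nonneg n ω) (abs_nonneg _)))
  have hAsum : ∀ᵐ ω ∂μ, Summable fun n => w n * (C * (g n ω * |κ n ω|)) := by
    filter_upwards [hwg, he.ae_abs_condExp_le le_rfl] with ω hω ⟨K, hK⟩
    refine .of_nonneg_of_le (fun n => hA0 n ω) (fun n => ?_) (hω.mul_right (C * K))
    have := mul_nonneg (mul_nonneg (hw0 n) (h.gain_nonneg n ω)) hC0
    calc w n * (C * (g n ω * |κ n ω|)) = w n * g n ω * C * |κ n ω| := by ring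
      _ ≤ w n * g n ω * C * K := by gcongr; exact hK n
      _ = w n * g n ω * (C * K) := by ring
  filter_upwards [ae_summable_of_condExp_le_add_sub
    (fun n ω => mul_nonneg (hw0 n) (hWq0 n ω)) (fun n => (hWi n).const_mul _) hA0
    (fun n => stronglyMeasurable_const.mul (stronglyMeasurable_const.mul
      ((h.stronglyMeasurable_gain n).mul (hκm n))))
    (fun n ω => mul_nonneg (div_nonneg (hw0 n) zero_le_two)
      (mul_nonneg (h.gain_nonneg n ω) (hWq0 n ω)))
    (fun n => (h.integrable_gain_mul_energy_pow (hWi n)).const_mul _) hC hAsum] with ω hω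
  exact (hω.mul_left 2).congr fun n => by ring

lemma ae_summable_gain_div_rpow (h : EnergyRecursion F e g u W) (hc : 0 ≤ c) (hcγ : c < γ)
    (hg : ∀ᵐ ω ∂μ, (fun n => ∑ k ∈ range n, g k ω) =o[atTop] fun n : ℕ => (n : ℝ) ^ c) :
    ∀ᵐ ω ∂μ, Summable fun k => g k ω / ((k : ℝ) + 1) ^ γ := by
  filter_upwards [hg] with ω hω
  exact summable_div_rpow_of_sum_range_isBigO (fun k => h.gain_nonneg k ω) hc hcγ hω.isBigO

lemma ae_summable_gain_mul_energy_pow_div_rpow [IsFiniteMeasure μ] (h : EnergyRecursion F e g u W)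
    (he : HasBddCondMoment F μ e a) (hqa : 2 * ((q : ℝ) + 1) ≤ a) (he0 : ∀ n, μ[e n | F n] =ᵐ[μ] 0)
    (hW0 : Integrable (fun ω => W 0 ω ^ (q + 1)) μ) (hc : 0 ≤ c) (hcγ : c < γ)
    (hg : ∀ᵐ ω ∂μ, (fun n => ∑ k ∈ range n, g k ω) =o[atTop] fun n : ℕ => (n : ℝ) ^ c) :
    ∀ᵐ ω ∂μ, Summable fun k => g k ω * W k ω ^ (q + 1) / ((k : ℝ) + 1) ^ γ := by
  have ha : 1 ≤ a := by linarith [q.cast_nonneg (α := ℝ)]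
  have hY : HasBddCondMoment F μ (fun n ω => (e n ω ^ 2) ^ (q + 1)) 1 :=
    he.of_abs_eq_abs_pow (j := 2 * (q + 1)) zero_le_one (by push_cast; linarith)
      (fun n => ((he.stronglyMeasurable n).pow 2).pow _) fun n ω => by rw [← pow_mul, abs_pow]
  have hw : Antitone fun n : ℕ => (((n : ℝ) + 1) ^ γ)⁻¹ := fun m n hmn => by
    have := hc.trans hcγ.le
    dsimp only
    gcongr
  simp_rw [div_eq_inv_mul]
  refine h.ae_summable_mul_gain_mul_energy_pow (he.integrable ha) he0 hY hW0
    (fun n => by positivity) hw ?_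
  simpa only [div_eq_inv_mul] using h.ae_summable_gain_div_rpow hc hcγ hg

theorem isLittleO_sum_gain_mul_energy_pow [IsFiniteMeasure μ] (h : EnergyRecursion F e g u W)
    (he : HasBddCondMoment F μ e a) (hqa : 2 * ((q : ℝ) + 1) ≤ a) (he0 : ∀ n, μ[e n | F n] =ᵐ[μ] 0)
    (hW0 : Integrable (fun ω => W 0 ω ^ (q + 1)) μ) (hc : 0 ≤ c) (hcγ : c < γ)
    (hg : ∀ᵐ ω ∂μ, (fun n => ∑ k ∈ range n, g k ω) =o[atTop] fun n : ℕ => (n : ℝ) ^ c) :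
    ∀ᵐ ω ∂μ, (fun n => ∑ k ∈ range n, g k ω * W k ω ^ (q + 1)) =o[atTop]
      fun n : ℕ => (n : ℝ) ^ γ := by
  filter_upwards [h.ae_summable_gain_mul_energy_pow_div_rpow he hqa he0 hW0 hc hcγ hg] with ω hω
  exact isLittleO_sum_range_of_tendsto_sum_div_rpow (hc.trans_lt hcγ) hω.hasSum.tendsto_sum_nat

lemma isLittleO_sum_coupling_mul [IsFiniteMeasure μ] (h : EnergyRecursion F e g u W)
    (he : HasBddCondMoment F μ e 2) (he0 : ∀ n, μ[e n | F n] =ᵐ[μ] 0) (hc : 0 < c)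
    (hgW : ∀ᵐ ω ∂μ, Summable fun k => g k ω * W k ω / ((k : ℝ) + 1) ^ (c * 2)) :
    ∀ᵐ ω ∂μ, (fun n => ∑ k ∈ range n, u k ω * e k ω) =o[atTop] fun n : ℕ => (n : ℝ) ^ c := by
  refine he.isLittleO_sum_mul one_lt_two le_rfl he0 h.stronglyMeasurable_coupling hc ?_
  filter_upwards [hgW] with ω hω
  refine .of_nonneg_of_le (fun k => by positivity) (fun k => ?_) hω
  rw [Real.rpow_two, sq_abs]
  gcongr
  exact h.coupling_sq_le_gain_mul_energy k ω

lemma isLittleO_sum_gain_mul_sq [IsFiniteMeasure μ] (h : EnergyRecursion F e g u W)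
    (he : HasBddCondMoment F μ (fun n ω => e n ω ^ 2) r) (hr1 : 1 < r) (hr2 : r ≤ 2) (hc : 0 < c)
    (hg : ∀ᵐ ω ∂μ, (fun n => ∑ k ∈ range n, g k ω) =o[atTop] fun n : ℕ => (n : ℝ) ^ c) :
    ∀ᵐ ω ∂μ, (fun n => ∑ k ∈ range n, g k ω * e k ω ^ 2) =o[atTop] fun n : ℕ => (n : ℝ) ^ c := by
  refine he.isLittleO_sum_mul_of_nonneg hr1 hr2 h.stronglyMeasurable_gain h.gain_nonneg hc ?_ hg
  filter_upwards [h.ae_summable_gain_div_rpow hc.le (lt_mul_of_one_lt_right hc hr1) hg] with ω hω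
  refine .of_nonneg_of_le (fun k => by positivity) (fun k => ?_) hω
  rw [abs_of_nonneg (h.gain_nonneg k ω)]
  gcongr
  exact Real.rpow_le_self_of_le_one (h.gain_nonneg k ω) (h.gain_le_one k ω) hr1.le

lemma sum_gain_mul_energy_add (h : EnergyRecursion F e g u W) (n : ℕ) (ω : Ω) :
    ∑ k ∈ range n, g k ω * W k ω + W n ω =
      W 0 ω + 2 * ∑ k ∈ range n, u k ω * e k ω + ∑ k ∈ range n, g k ω * e k ω ^ 2 := by
  induction n with
  | zero => simp
  | succ n ih =>
    simp only [sum_range_succ, h.energy_succ n ω]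
    linarith

theorem isLittleO_sum_gain_mul_energy [IsFiniteMeasure μ] (h : EnergyRecursion F e g u W)
    (he : HasBddCondMoment F μ e a) (hr1 : 1 < r) (hr2 : r ≤ 2) (hra : 2 * ((q : ℝ) + 1) * r ≤ a)
    (he0 : ∀ n, μ[e n | F n] =ᵐ[μ] 0) (hW0 : Integrable (fun ω => W 0 ω ^ (q + 1)) μ) (hc : 0 < c)
    (hg : ∀ᵐ ω ∂μ, (fun n => ∑ k ∈ range n, g k ω) =o[atTop] fun n : ℕ => (n : ℝ) ^ c) :
    ∀ᵐ ω ∂μ, (fun n => ∑ k ∈ range n, g k ω * W k ω) =o[atTop] fun n : ℕ => (n : ℝ) ^ c := by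
  have := q.cast_nonneg (α := ℝ)
  have he1 : HasBddCondMoment F μ e 2 := he.of_abs_eq_abs_pow (j := 1) zero_le_two
    (by push_cast; nlinarith) he.stronglyMeasurable fun n ω => (pow_one _).symm
  have he2 : HasBddCondMoment F μ (fun n ω => e n ω ^ 2) r :=
    he.of_abs_eq_abs_pow (j := 2) (zero_le_one.trans hr1.le) (by push_cast; nlinarith)
      (fun n => (he.stronglyMeasurable n).pow 2) fun n ω => abs_pow _ 2
  have hcc : c < c * 2 := lt_mul_of_one_lt_right hc one_lt_two
  have hgW : ∀ᵐ ω ∂μ, Summable fun k => g k ω * W k ω / ((k : ℝ) + 1) ^ (c * 2) := by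
    filter_upwards [h.ae_summable_gain_div_rpow hc.le hcc hg,
      h.ae_summable_gain_mul_energy_pow_div_rpow he (by nlinarith) he0 hW0 hc.le hcc hg]
      with ω hω₁ hω₂
    refine .of_nonneg_of_le (fun k => ?_) (fun k => ?_) (hω₁.add hω₂)
    · exact div_nonneg (h.gain_mul_energy_nonneg k ω) (by positivity)
    · rw [← add_div, ← mul_one_add]
      have := h.gain_nonneg k ω
      gcongr
      simpa [← Real.rpow_natCast] using
        rpow_le_one_add_rpow (h.energy_nonneg k ω) zero_le_one (by simp : (1 : ℝ) ≤ (q + 1 : ℕ))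
  filter_upwards [h.isLittleO_sum_coupling_mul he1 he0 hc hgW,
    h.isLittleO_sum_gain_mul_sq he2 hr1 hr2 hc hg] with ω hcoupling hnoise
  have hrhs := ((isLittleO_const_natCast_rpow hc (W 0 ω)).add
    (hcoupling.const_mul_left 2)).add hnoise
  refine IsBigO.trans_isLittleO (IsBigO.of_bound' (.of_forall fun n => ?_)) hrhs
  rw [Real.norm_of_nonneg (sum_nonneg fun k _ => h.gain_mul_energy_nonneg k ω),
    ← h.sum_gain_mul_energy_add n ω]
  exact (le_add_of_nonneg_right (h.energy_nonneg n ω)).trans (le_abs_self _)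

theorem isLittleO_sum_sqrt_gain_mul_energy_mul [IsFiniteMeasure μ] (h : EnergyRecursion F e g u W)
    (hη : HasBddCondMoment F μ η r) (hr1 : 1 < r) (hr2 : r ≤ 2) (hc0 : 0 ≤ c) (hc1 : c < 1)
    (hcr : 1 < (1 + c) / 2 * r)
    (hgW : ∀ᵐ ω ∂μ, (fun n => ∑ k ∈ range n, g k ω * W k ω) =o[atTop]
      fun n : ℕ => (n : ℝ) ^ c) :
    ∀ᵐ ω ∂μ, (fun n => ∑ k ∈ range n, √(g k ω * W k ω) * η k ω) =o[atTop]
      fun n : ℕ => (n : ℝ) ^ ((1 + c) / 2) := by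
  refine hη.isLittleO_sum_mul_of_nonneg hr1 hr2
    (fun n => Real.continuous_sqrt.comp_stronglyMeasurable
      ((h.stronglyMeasurable_gain n).mul (h.stronglyMeasurable_energy n)))
    (fun n ω => Real.sqrt_nonneg _) (by positivity) ?_ ?_
  · filter_upwards [hgW] with ω hω
    refine .of_nonneg_of_le (fun k => by positivity) (fun k => ?_)
      ((summable_one_div_natCast_add_one_rpow hcr).add (summable_div_rpow_of_sum_range_isBigO
        (fun k => h.gain_mul_energy_nonneg k ω) hc0 (hc1.trans hcr) hω.isBigO))
    rw [← add_div]
    gcongr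
    calc |√(g k ω * W k ω)| ^ r ≤ 1 + |√(g k ω * W k ω)| ^ (2 : ℝ) :=
          rpow_le_one_add_rpow (abs_nonneg _) (by positivity) hr2
      _ = 1 + g k ω * W k ω := by
          rw [Real.rpow_two, sq_abs, Real.sq_sqrt (h.gain_mul_energy_nonneg k ω)]
  · filter_upwards [hgW] with ω hω
    exact isLittleO_sum_range_sqrt (fun k => h.gain_mul_energy_nonneg k ω) hω

theorem isLittleO_sum_add_pow_sub_condExp [IsFiniteMeasure μ] (h : EnergyRecursion F e g u W)
    (he : HasBddCondMoment F μ e a) (he0 : ∀ n, μ[e n | F n] =ᵐ[μ] 0) (hc0 : 0 < c) (hc1 : c < 1)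
    (hca : 1 < c * (a / (2 * ((q : ℝ) + 1)))) (hW0 : Integrable (fun ω => W 0 ω ^ (q + 1)) μ)
    (hg : ∀ᵐ ω ∂μ, (fun n => ∑ k ∈ range n, g k ω) =o[atTop] fun n : ℕ => (n : ℝ) ^ c)
    (hx : ∀ᵐ ω ∂μ, ∃ B, 0 ≤ B ∧ ∀ᶠ k in atTop, x k ω ^ 2 ≤ B * (g k ω * W k ω)) :
    ∀ᵐ ω ∂μ, (fun n => ∑ k ∈ range n, ((x k ω + e k ω) ^ (2 * (q + 1)) -
      (μ[fun ω => e k ω ^ (2 * (q + 1)) | F k]) ω)) =o[atTop]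
        fun n : ℕ => (n : ℝ) ^ ((1 + c) / 2) := by
  obtain ⟨r, hr1, hr2, hra, hcr⟩ := exists_moment_exponent hc0 hc1 hca
  have hra' : 2 * ((q : ℝ) + 1) * r ≤ a := by
    rwa [le_div_iff₀ (by positivity), mul_comm] at hra
  have hη : HasBddCondMoment F μ (fun n ω => |e n ω| ^ (2 * q + 1)) r :=
    he.of_abs_eq_abs_pow (j := 2 * q + 1) (zero_le_one.trans hr1.le) (by push_cast; nlinarith)
      (fun n => (he.stronglyMeasurable n).norm.pow _) fun n ω => by rw [abs_pow, abs_abs]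
  have hξ : HasBddCondMoment F μ (fun n ω => e n ω ^ (2 * (q + 1))) r :=
    he.of_abs_eq_abs_pow (zero_le_one.trans hr1.le) (by push_cast; linarith)
      (fun n => (he.stronglyMeasurable n).pow _) fun n ω => abs_pow _ _
  have hgW := h.isLittleO_sum_gain_mul_energy he hr1 hr2 hra' he0 hW0 hc0 hg
  filter_upwards [h.isLittleO_sum_sqrt_gain_mul_energy_mul hη hr1 hr2 hc0.le hc1 hcr hgW,
    h.isLittleO_sum_gain_mul_energy_pow he (by nlinarith) he0 hW0 hc0.le
      (by linarith : c < (1 + c) / 2) hg,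
    hξ.isLittleO_sum_sub_condExp hr1 hr2 (by positivity) hcr, hx]
    with ω hcross hpow hnoise ⟨B, hB0, hB⟩
  refine ((isLittleO_sum_add_pow_sub_pow (by positivity) hB0 (h.gain_nonneg · ω)
    (h.gain_le_one · ω) (h.energy_nonneg · ω) hB hcross hpow).add hnoise).congr_left fun n => ?_
  rw [← sum_add_distrib]
  exact sum_congr rfl fun k _ => sub_add_sub_cancel _ _ _

end EnergyRecursion

end EnergyRecursion

section LinearAlgebra

variable {m n : Type*} [Fintype m] [Fintype n]

lemma dotProduct_self_nonneg (v : n → ℝ) : 0 ≤ v ⬝ᵥ v := by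
  simpa using dotProduct_self_star_nonneg v

lemma dotProduct_sq_le (v w : n → ℝ) : (v ⬝ᵥ w) ^ 2 ≤ (v ⬝ᵥ v) * (w ⬝ᵥ w) := by
  simpa [dotProduct, sq] using sum_mul_sq_le_sq_mul_sq univ v w

lemma mulVec_dotProduct_self_le (A : Matrix m n ℝ) (v : n → ℝ) :
    (A *ᵥ v) ⬝ᵥ (A *ᵥ v) ≤ (A * Aᵀ).trace * (v ⬝ᵥ v) := by
  simp only [trace, diag_apply, mul_apply', sum_mul]
  exact sum_le_sum fun i _ => (sq _).symm.trans_le (dotProduct_sq_le (A i) v)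

open scoped MatrixOrder Norms.L2Operator in
lemma dotProduct_self_le_trace_mul_inv [DecidableEq n] {A : Matrix n n ℝ} (hA : A.PosDef)
    (v : n → ℝ) : v ⬝ᵥ v ≤ A.trace * (v ⬝ᵥ (A⁻¹ *ᵥ v)) := by
  obtain ⟨B, hB⟩ := CStarAlgebra.nonneg_iff_eq_star_mul_self.1 hA.posSemidef.nonneg
  replace hB : A = Bᵀ * B := by simpa [star_eq_conjTranspose] using hB
  set w := A⁻¹ *ᵥ v with hw
  have hAw : Bᵀ *ᵥ (B *ᵥ w) = v := by
    rw [mulVec_mulVec, ← hB, hw, mulVec_mulVec, mul_nonsing_inv _ hA.det_pos.ne'.isUnit,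
      one_mulVec]
  have hBw : (B *ᵥ w) ⬝ᵥ (B *ᵥ w) = v ⬝ᵥ w := by
    rw [dotProduct_mulVec, ← mulVec_transpose, hAw]
  calc v ⬝ᵥ v = (Bᵀ *ᵥ (B *ᵥ w)) ⬝ᵥ (Bᵀ *ᵥ (B *ᵥ w)) := by rw [hAw]
    _ ≤ (Bᵀ * Bᵀᵀ).trace * ((B *ᵥ w) ⬝ᵥ (B *ᵥ w)) := mulVec_dotProduct_self_le _ _
    _ = A.trace * (v ⬝ᵥ w) := by rw [hBw, transpose_transpose, hB]

lemma log_trace_sub_log_det_smul [DecidableEq n] [Nonempty n] {A : Matrix n n ℝ} (hA : A.PosDef)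
    {t : ℝ} (ht : 0 < t) :
    Fintype.card n * Real.log (t • A).trace - Real.log (t • A).det =
      Fintype.card n * Real.log A.trace - Real.log A.det := by
  rw [trace_smul, smul_eq_mul, det_smul, Real.log_mul ht.ne' hA.trace_pos.ne',
    Real.log_mul (pow_pos ht _).ne' hA.det_pos.ne', Real.log_pow]
  ring

lemma trace_sq_mul_trace_inv_mul_transpose_smul [DecidableEq n] {A : Matrix n n ℝ}
    (hA : IsUnit A.det) {t : ℝ} (ht : t ≠ 0) :
    (t • A).trace ^ 2 * ((t • A)⁻¹ * ((t • A)⁻¹)ᵀ).trace =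
      A.trace ^ 2 * (A⁻¹ * (A⁻¹)ᵀ).trace := by
  have hinv : (t • A)⁻¹ = t⁻¹ • A⁻¹ := inv_smul' A (Units.mk0 t ht) hA
  simp only [hinv, trace_smul, transpose_smul, Matrix.smul_mul, Matrix.mul_smul,
    smul_eq_mul]
  field_simp

section ScaledLimit

variable [DecidableEq n] {ι : Type*} {l : Filter ι} {A : ι → Matrix n n ℝ} {L : Matrix n n ℝ}
  {α b : ι → ℝ}

lemma isLittleO_log_trace_of_isLittleO_log_det [Nonempty n] (hA : ∀ k, (A k).PosDef)
    (hL : L.PosDef) (hα : ∀ k, 0 < α k) (hconv : Tendsto (fun k => (α k)⁻¹ • A k) l (𝓝 L))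
    (hb : (fun _ => (1 : ℝ)) =o[l] b) (hdet : (fun k => Real.log (A k).det) =o[l] b) :
    (fun k => Real.log (A k).trace) =o[l] b := by
  have hcont : ContinuousAt (fun M : Matrix n n ℝ =>
      Fintype.card n * Real.log M.trace - Real.log M.det) L :=
    ((continuous_id.matrix_trace.continuousAt.log hL.trace_pos.ne').const_mul _).sub
      (continuous_id.matrix_det.continuousAt.log hL.det_pos.ne')
  have hlim := (hcont.tendsto.comp hconv).congr fun k =>
    log_trace_sub_log_det_smul (hA k) (inv_pos.2 (hα k))
  have hsum := ((hlim.isBigO_one ℝ).trans_isLittleO hb).add hdet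
  refine (hsum.const_mul_left (Fintype.card n : ℝ)⁻¹).congr_left fun k => ?_
  rw [sub_add_cancel, inv_mul_cancel_left₀ (by positivity)]

lemma exists_eventually_inv_mulVec_dotProduct_self_le (hA : ∀ k, IsUnit (A k).det)
    (hL : IsUnit L.det) (hα : ∀ k, α k ≠ 0)
    (hconv : Tendsto (fun k => (α k)⁻¹ • A k) l (𝓝 L)) :
    ∃ B : ℝ, 0 ≤ B ∧ ∀ᶠ k in l, ∀ v : n → ℝ,
      (A k).trace ^ 2 * (((A k)⁻¹ *ᵥ v) ⬝ᵥ ((A k)⁻¹ *ᵥ v)) ≤ B * (v ⬝ᵥ v) := by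
  set ρ : Matrix n n ℝ → ℝ := fun M => M.trace ^ 2 * (M⁻¹ * (M⁻¹)ᵀ).trace
  have hinv : ContinuousAt (fun M : Matrix n n ℝ => M⁻¹) L :=
    continuousAt_matrix_inv L (by
      simpa [Ring.inverse_eq_inv'] using continuousAt_inv₀ hL.ne_zero)
  have hcont : ContinuousAt ρ L :=
    (continuous_id.matrix_trace.pow 2).continuousAt.mul
      (ContinuousAt.comp (f := fun M : Matrix n n ℝ => M⁻¹)
        (continuous_id.matrix_mul continuous_id.matrix_transpose).matrix_trace.continuousAt hinv)
  have hlim : Tendsto (fun k => ρ (A k)) l (𝓝 (ρ L)) :=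
    (hcont.tendsto.comp hconv).congr fun k =>
      trace_sq_mul_trace_inv_mul_transpose_smul (hA k) (inv_ne_zero (hα k))
  refine ⟨|ρ L| + 1, by positivity, ?_⟩
  filter_upwards [hlim.eventually_le_const ((le_abs_self _).trans_lt (lt_add_one _))] with k hk v
  calc (A k).trace ^ 2 * (((A k)⁻¹ *ᵥ v) ⬝ᵥ ((A k)⁻¹ *ᵥ v))
      ≤ (A k).trace ^ 2 * (((A k)⁻¹ * ((A k)⁻¹)ᵀ).trace * (v ⬝ᵥ v)) := by
        gcongr
        exact mulVec_dotProduct_self_le _ v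
    _ = ρ (A k) * (v ⬝ᵥ v) := (mul_assoc _ _ _).symm
    _ ≤ (|ρ L| + 1) * (v ⬝ᵥ v) := mul_le_mul_of_nonneg_right hk (dotProduct_self_nonneg v)

end ScaledLimit

end LinearAlgebra

section Regression

variable {Ω : Type*} {d : ℕ} {S L : Matrix (Fin d) (Fin d) ℝ} {θ : Fin d → ℝ}
  {Φ : ℕ → Ω → Fin d → ℝ} {X e : ℕ → Ω → ℝ} {ω : Ω} {c : ℝ}

/-- The trace of the information matrix `S_{n-1}`, read as `S` for `n = 0`. -/
def informationTrace (S : Matrix (Fin d) (Fin d) ℝ) (Φ : ℕ → Ω → Fin d → ℝ) (n : ℕ) (ω : Ω) : ℝ :=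
  S.trace + ∑ k ∈ range n, Φ k ω ⬝ᵥ Φ k ω

/-- The weighted estimation error `S_{n-1} (θ̂_n - θ)`. The noise is indexed as in
`EnergyRecursion`, so `e k` is the innovation `ε_{k+1}` of the model. -/
def weightedError (S : Matrix (Fin d) (Fin d) ℝ) (θ : Fin d → ℝ) (Φ : ℕ → Ω → Fin d → ℝ)
    (e : ℕ → Ω → ℝ) (n : ℕ) (ω : Ω) : Fin d → ℝ :=
  ∑ k ∈ range n, e k ω • Φ k ω - S *ᵥ θ

/-- The fraction of the trace of `S_n` contributed by the regressor `Φ_n`, a scalar counterpart of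
the explosion coefficient. -/
def informationGain (S : Matrix (Fin d) (Fin d) ℝ) (Φ : ℕ → Ω → Fin d → ℝ) (n : ℕ) (ω : Ω) : ℝ :=
  Φ n ω ⬝ᵥ Φ n ω / informationTrace S Φ (n + 1) ω

/-- The squared norm of the weighted error relative to the trace of `S_{n-1}`: up to constants, the
quadratic form of `S_{n-1}` at `θ̂_n - θ` whenever `S_{n-1}` is well conditioned. -/
def errorEnergy (S : Matrix (Fin d) (Fin d) ℝ) (θ : Fin d → ℝ) (Φ : ℕ → Ω → Fin d → ℝ)
    (e : ℕ → Ω → ℝ) (n : ℕ) (ω : Ω) : ℝ :=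
  weightedError S θ Φ e n ω ⬝ᵥ weightedError S θ Φ e n ω / informationTrace S Φ n ω

/-- The coefficient through which the innovation `e n` enters the error energy linearly. -/
def noiseCoupling (S : Matrix (Fin d) (Fin d) ℝ) (θ : Fin d → ℝ) (Φ : ℕ → Ω → Fin d → ℝ)
    (e : ℕ → Ω → ℝ) (n : ℕ) (ω : Ω) : ℝ :=
  Φ n ω ⬝ᵥ weightedError S θ Φ e n ω / informationTrace S Φ (n + 1) ω

lemma posDef_Smat (hS : S.PosDef) (n : ℕ) (ω : Ω) : (Smat S Φ n ω).PosDef :=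
  hS.add_posSemidef (posSemidef_sum _ fun k _ => by
    simpa using posSemidef_vecMulVec_self_star (Φ k ω))

lemma trace_Smat (n : ℕ) (ω : Ω) : (Smat S Φ n ω).trace = informationTrace S Φ (n + 1) ω := by
  simp [Smat, informationTrace, trace_sum, trace_vecMulVec]

lemma informationTrace_succ (n : ℕ) (ω : Ω) :
    informationTrace S Φ (n + 1) ω = informationTrace S Φ n ω + Φ n ω ⬝ᵥ Φ n ω := by
  rw [informationTrace, sum_range_succ, ← add_assoc, informationTrace]

lemma weightedError_succ (n : ℕ) (ω : Ω) :
    weightedError S θ Φ e (n + 1) ω = weightedError S θ Φ e n ω + e n ω • Φ n ω := by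
  rw [weightedError, sum_range_succ, add_sub_right_comm, weightedError]

lemma lsq_succ (hS : S.PosDef) (hmodel : ∀ n, X (n + 1) ω = θ ⬝ᵥ Φ n ω + e n ω) (n : ℕ) :
    lsq S Φ X (n + 1) ω = θ + (Smat S Φ n ω)⁻¹ *ᵥ weightedError S θ Φ e (n + 1) ω := by
  have hnormal : ∑ k ∈ Icc 1 (n + 1), X k ω • Φ (k - 1) ω =
      Smat S Φ n ω *ᵥ θ + weightedError S θ Φ e (n + 1) ω := by
    calc ∑ k ∈ Icc 1 (n + 1), X k ω • Φ (k - 1) ω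
        = ∑ k ∈ range (n + 1), X (k + 1) ω • Φ k ω := by
          rw [range_eq_Ico]
          exact (sum_Ico_add' (fun k => X k ω • Φ (k - 1) ω) 0 (n + 1) 1).symm
      _ = ∑ k ∈ range (n + 1), vecMulVec (Φ k ω) (Φ k ω) *ᵥ θ +
            ∑ k ∈ range (n + 1), e k ω • Φ k ω := by
          rw [← sum_add_distrib]
          refine sum_congr rfl fun k _ => ?_
          rw [hmodel, add_smul, vecMulVec_mulVec, dotProduct_comm, op_smul_eq_smul]
      _ = Smat S Φ n ω *ᵥ θ + weightedError S θ Φ e (n + 1) ω := by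
          rw [Smat, weightedError, add_mulVec, sum_mulVec]
          abel
  have hunit : IsUnit (Smat S Φ n ω).det := (posDef_Smat hS n ω).det_pos.ne'.isUnit
  rw [lsq, Nat.add_sub_cancel, hnormal, mulVec_add, mulVec_mulVec, nonsing_inv_mul _ hunit,
    one_mulVec]

section Positive

variable [NeZero d]

lemma informationTrace_pos (hS : S.PosDef) (n : ℕ) (ω : Ω) : 0 < informationTrace S Φ n ω :=
  add_pos_of_pos_of_nonneg hS.trace_pos (sum_nonneg fun _ _ => dotProduct_self_nonneg _)

lemma informationGain_nonneg (hS : S.PosDef) (n : ℕ) (ω : Ω) : 0 ≤ informationGain S Φ n ω :=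
  div_nonneg (dotProduct_self_nonneg _) (informationTrace_pos hS _ ω).le

lemma errorEnergy_nonneg (hS : S.PosDef) (n : ℕ) (ω : Ω) : 0 ≤ errorEnergy S θ Φ e n ω :=
  div_nonneg (dotProduct_self_nonneg _) (informationTrace_pos hS _ ω).le

lemma one_sub_informationGain (hS : S.PosDef) (n : ℕ) (ω : Ω) :
    1 - informationGain S Φ n ω = informationTrace S Φ n ω / informationTrace S Φ (n + 1) ω := by
  rw [informationGain, one_sub_div (informationTrace_pos hS _ ω).ne', informationTrace_succ,
    add_sub_cancel_right]

lemma informationGain_le_one (hS : S.PosDef) (n : ℕ) (ω : Ω) : informationGain S Φ n ω ≤ 1 := by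
  rw [← sub_nonneg, one_sub_informationGain hS]
  exact div_nonneg (informationTrace_pos hS n ω).le (informationTrace_pos hS _ ω).le

lemma retained_errorEnergy (hS : S.PosDef) (n : ℕ) (ω : Ω) :
    (1 - informationGain S Φ n ω) * errorEnergy S θ Φ e n ω =
      weightedError S θ Φ e n ω ⬝ᵥ weightedError S θ Φ e n ω / informationTrace S Φ (n + 1) ω := by
  rw [one_sub_informationGain hS, errorEnergy, mul_comm,
    div_mul_div_cancel₀ (informationTrace_pos hS n ω).ne']

lemma noiseCoupling_sq_le (hS : S.PosDef) (n : ℕ) (ω : Ω) :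
    noiseCoupling S θ Φ e n ω ^ 2 ≤ informationGain S Φ n ω *
      ((1 - informationGain S Φ n ω) * errorEnergy S θ Φ e n ω) := by
  rw [retained_errorEnergy hS, noiseCoupling, informationGain, div_pow, div_mul_div_comm, ← sq]
  gcongr
  exact dotProduct_sq_le _ _

lemma errorEnergy_succ (hS : S.PosDef) (n : ℕ) (ω : Ω) :
    errorEnergy S θ Φ e (n + 1) ω =
      (1 - informationGain S Φ n ω) * errorEnergy S θ Φ e n ω
        + 2 * noiseCoupling S θ Φ e n ω * e n ω + informationGain S Φ n ω * e n ω ^ 2 := by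
  rw [retained_errorEnergy hS, errorEnergy, weightedError_succ, noiseCoupling, informationGain]
  simp only [add_dotProduct, dotProduct_add, smul_dotProduct, dotProduct_smul, smul_eq_mul,
    dotProduct_comm (weightedError S θ Φ e n ω) (Φ n ω)]
  ring

lemma sum_informationGain_le (hS : S.PosDef) (n : ℕ) (ω : Ω) :
    ∑ k ∈ range n, informationGain S Φ k ω ≤
      Real.log (informationTrace S Φ n ω) - Real.log (informationTrace S Φ 0 ω) := by
  rw [← sum_range_sub fun k => Real.log (informationTrace S Φ k ω)]
  refine sum_le_sum fun k _ => ?_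
  have hk := informationTrace_pos (Φ := Φ) hS k ω
  have hk' := informationTrace_pos (Φ := Φ) hS (k + 1) ω
  have hlog := Real.log_le_sub_one_of_pos (div_pos hk hk')
  rw [Real.log_div hk.ne' hk'.ne', ← one_sub_informationGain hS] at hlog
  linarith

lemma isLittleO_sum_informationGain (hS : S.PosDef) (hL : L.PosDef) {α : ℕ → ℝ}
    (hα : ∀ n, 0 < α n) (hconv : Tendsto (fun n => (α n)⁻¹ • Smat S Φ n ω) atTop (𝓝 L))
    (hc : 0 < c)
    (hdet : (fun n => Real.log (Smat S Φ n ω).det) =o[atTop] fun n : ℕ => (n : ℝ) ^ c) :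
    (fun n => ∑ k ∈ range n, informationGain S Φ k ω) =o[atTop] fun n : ℕ => (n : ℝ) ^ c := by
  have htrace := isLittleO_log_trace_of_isLittleO_log_det (posDef_Smat hS · ω) hL hα hconv
    (isLittleO_const_natCast_rpow hc 1) hdet
  have hrhs := htrace.sub (isLittleO_const_natCast_rpow hc (Real.log (informationTrace S Φ 0 ω)))
  refine IsBigO.trans_isLittleO (IsBigO.of_bound' (.of_forall fun n => ?_)) hrhs
  rw [Real.norm_of_nonneg (sum_nonneg fun k _ => informationGain_nonneg hS k ω), trace_Smat]
  calc ∑ k ∈ range n, informationGain S Φ k ω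
      ≤ ∑ k ∈ range (n + 1), informationGain S Φ k ω := by
        rw [sum_range_succ]
        exact le_add_of_nonneg_right (informationGain_nonneg hS n ω)
    _ ≤ _ := (sum_informationGain_le hS (n + 1) ω).trans (le_abs_self _)

lemma informationGain_le_expl (hS : S.PosDef) (n : ℕ) (ω : Ω) :
    informationGain S Φ n ω ≤ expl S Φ n ω := by
  rw [informationGain, div_le_iff₀' (informationTrace_pos hS _ ω), ← trace_Smat]
  exact dotProduct_self_le_trace_mul_inv (posDef_Smat hS n ω) _

lemma tendsto_informationGain (hS : S.PosDef)
    (hf : Tendsto (fun n => expl S Φ n ω) atTop (𝓝 0)) :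
    Tendsto (fun n => informationGain S Φ n ω) atTop (𝓝 0) :=
  squeeze_zero (fun n => informationGain_nonneg hS n ω) (fun n => informationGain_le_expl hS n ω) hf

lemma prediction_sq_le (hS : S.PosDef) (hmodel : ∀ n, X (n + 1) ω = θ ⬝ᵥ Φ n ω + e n ω) {n : ℕ}
    {B : ℝ} (hB0 : 0 ≤ B)
    (hB : ∀ v, (Smat S Φ n ω).trace ^ 2 *
      (((Smat S Φ n ω)⁻¹ *ᵥ v) ⬝ᵥ ((Smat S Φ n ω)⁻¹ *ᵥ v)) ≤ B * (v ⬝ᵥ v))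
    (hgain : informationGain S Φ (n + 1) ω ≤ 1 / 2) :
    ((θ - lsq S Φ X (n + 1) ω) ⬝ᵥ Φ (n + 1) ω) ^ 2 ≤
      2 * B * (informationGain S Φ (n + 1) ω * errorEnergy S θ Φ e (n + 1) ω) := by
  set M := weightedError S θ Φ e (n + 1) ω with hM
  set t := informationTrace S Φ (n + 1) ω with ht
  set t' := informationTrace S Φ (n + 1 + 1) ω with ht'
  have ht0 : 0 < t := informationTrace_pos hS _ ω
  have ht0' : 0 < t' := informationTrace_pos hS _ ω
  have hratio : t' / t ≤ 2 := by
    have : 1 / 2 ≤ t / t' := by linarith [one_sub_informationGain (Φ := Φ) hS (n + 1) ω]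
    rw [div_le_div_iff₀ two_pos ht0'] at this
    rw [div_le_iff₀ ht0]
    linarith
  have hMn := hB M
  rw [trace_Smat, ← le_div_iff₀' (by positivity)] at hMn
  rw [lsq_succ hS hmodel, sub_add_cancel_left, neg_dotProduct, neg_sq]
  calc ((Smat S Φ n ω)⁻¹ *ᵥ M ⬝ᵥ Φ (n + 1) ω) ^ 2
      ≤ B * (M ⬝ᵥ M) / t ^ 2 * (Φ (n + 1) ω ⬝ᵥ Φ (n + 1) ω) :=
        (dotProduct_sq_le _ _).trans
          (mul_le_mul_of_nonneg_right hMn (dotProduct_self_nonneg _))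
    _ = t' / t * (B * (informationGain S Φ (n + 1) ω * errorEnergy S θ Φ e (n + 1) ω)) := by
        rw [informationGain, errorEnergy, ← hM, ← ht, ← ht']
        field_simp
    _ ≤ 2 * (B * (informationGain S Φ (n + 1) ω * errorEnergy S θ Φ e (n + 1) ω)) := by
        have := informationGain_nonneg (Φ := Φ) hS (n + 1) ω
        have := errorEnergy_nonneg (θ := θ) (Φ := Φ) (e := e) hS (n + 1) ω
        gcongr
    _ = 2 * B * (informationGain S Φ (n + 1) ω * errorEnergy S θ Φ e (n + 1) ω) :=
        (mul_assoc _ _ _).symm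

lemma exists_eventually_prediction_sq_le (hS : S.PosDef) (hL : L.PosDef) {α : ℕ → ℝ}
    (hα : ∀ n, 0 < α n) (hconv : Tendsto (fun n => (α n)⁻¹ • Smat S Φ n ω) atTop (𝓝 L))
    (hf : Tendsto (fun n => expl S Φ n ω) atTop (𝓝 0))
    (hmodel : ∀ n, X (n + 1) ω = θ ⬝ᵥ Φ n ω + e n ω) :
    ∃ B : ℝ, 0 ≤ B ∧ ∀ᶠ n in atTop, ((θ - lsq S Φ X n ω) ⬝ᵥ Φ n ω) ^ 2 ≤
      B * (informationGain S Φ n ω * errorEnergy S θ Φ e n ω) := by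
  obtain ⟨B, hB0, hB⟩ := exists_eventually_inv_mulVec_dotProduct_self_le
    (fun n => (posDef_Smat hS n ω).det_pos.ne'.isUnit) hL.det_pos.ne'.isUnit
    (fun n => (hα n).ne') hconv
  refine ⟨2 * B, by positivity, ?_⟩
  rw [← map_add_atTop_eq_nat 1, eventually_map]
  filter_upwards [hB, ((tendsto_informationGain hS hf).comp
    (tendsto_add_atTop_nat 1)).eventually_le_const one_half_pos] with n hBn hgain
  exact prediction_sq_le hS hmodel hB0 hBn hgain

end Positive

section Measurability

variable {m0 : MeasurableSpace Ω} {F : Filtration ℕ m0}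

lemma stronglyMeasurable_dotProduct {_ : MeasurableSpace Ω} {ι : Type*} [Fintype ι]
    {v w : Ω → ι → ℝ} (hv : StronglyMeasurable v) (hw : StronglyMeasurable w) :
    StronglyMeasurable fun ω => v ω ⬝ᵥ w ω :=
  (continuous_fst.dotProduct continuous_snd).comp_stronglyMeasurable (hv.prodMk hw)

lemma stronglyMeasurable_informationTrace (hΦ : ∀ n, StronglyMeasurable[F n] (Φ n)) {m n : ℕ}
    (hmn : m ≤ n + 1) : StronglyMeasurable[F n] (informationTrace S Φ m) :=
  stronglyMeasurable_const.add (stronglyMeasurable_fun_sum _ fun k hk =>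
    have hkn : k ≤ n := by have := mem_range.1 hk; omega
    stronglyMeasurable_dotProduct ((hΦ k).mono (F.mono hkn)) ((hΦ k).mono (F.mono hkn)))

lemma stronglyMeasurable_weightedError (hΦ : ∀ n, StronglyMeasurable[F n] (Φ n))
    (he : ∀ n, StronglyMeasurable[F (n + 1)] (e n)) (n : ℕ) :
    StronglyMeasurable[F n] (weightedError S θ Φ e n) :=
  (stronglyMeasurable_fun_sum _ fun k hk =>
    have hkn : k + 1 ≤ n := mem_range.1 hk
    ((he k).mono (F.mono hkn)).smul ((hΦ k).mono (F.mono (Nat.le_of_lt hkn)))).sub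
    stronglyMeasurable_const

theorem energyRecursion_errorEnergy [NeZero d] (hS : S.PosDef)
    (hΦ : ∀ n, StronglyMeasurable[F n] (Φ n)) (he : ∀ n, StronglyMeasurable[F (n + 1)] (e n)) :
    EnergyRecursion F e (informationGain S Φ) (noiseCoupling S θ Φ e) (errorEnergy S θ Φ e) where
  stronglyMeasurable_gain n := (stronglyMeasurable_dotProduct (hΦ n) (hΦ n)).div₀
    (stronglyMeasurable_informationTrace hΦ le_rfl) fun ω => (informationTrace_pos hS _ ω).ne'
  stronglyMeasurable_coupling n :=
    (stronglyMeasurable_dotProduct (hΦ n) (stronglyMeasurable_weightedError hΦ he n)).div₀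
    (stronglyMeasurable_informationTrace hΦ le_rfl) fun ω => (informationTrace_pos hS _ ω).ne'
  stronglyMeasurable_energy n :=
    (stronglyMeasurable_dotProduct (stronglyMeasurable_weightedError hΦ he n)
      (stronglyMeasurable_weightedError hΦ he n)).div₀
    (stronglyMeasurable_informationTrace hΦ n.le_succ) fun ω => (informationTrace_pos hS _ ω).ne'
  gain_nonneg := informationGain_nonneg hS
  gain_le_one := informationGain_le_one hS
  energy_nonneg := errorEnergy_nonneg hS
  coupling_sq_le := noiseCoupling_sq_le hS
  energy_succ := errorEnergy_succ hS

end Measurability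

end Regression

theorem cumulative_prediction_error_rate_general
    {Ω : Type*} {m0 : MeasurableSpace Ω} {μ : Measure Ω} [IsFiniteMeasure μ]
    (F : Filtration ℕ m0) {d : ℕ} (hd : 0 < d)
    (ε : ℕ → Ω → ℝ) (Φ : ℕ → Ω → Fin d → ℝ) (X : ℕ → Ω → ℝ) (θ : Fin d → ℝ)
    (S L : Matrix (Fin d) (Fin d) ℝ) (hS : S.PosDef) (hL : L.PosDef)
    (q : ℕ) (hq : 1 ≤ q) (a : ℝ) (ha : 2 * q < a) (σ2q : ℝ)
    (c : ℝ) (hc1 : 2 * q / a < c) (hc2 : c < 1)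
    (α : ℕ → Ω → ℝ)
    (hmodel : ∀ n ω, X (n + 1) ω = θ ⬝ᵥ Φ n ω + ε (n + 1) ω)
    (hεadapt : ∀ n, StronglyMeasurable[F n] (ε n))
    (hΦadapt : ∀ n, StronglyMeasurable[F n] (Φ n))
    (hmds : ∀ n, μ[ε (n + 1) | F n] =ᵐ[μ] 0)
    (hmomint : ∀ n, Integrable (fun ω => |ε (n + 1) ω| ^ a) μ)
    (hmom : ∀ᵐ ω ∂μ, ∃ C : ℝ, ∀ n, (μ[fun ω => |ε (n + 1) ω| ^ a | F n]) ω ≤ C)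
    (hmom2q : ∀ n, μ[fun ω => ε (n + 1) ω ^ (2 * q) | F n] =ᵐ[μ] fun _ => σ2q)
    (hf0 : ∀ᵐ ω ∂μ, Tendsto (fun n => expl S Φ n ω) atTop (𝓝 0))
    (hαpos : ∀ n ω, 0 < α n ω)
    (hconv : ∀ᵐ ω ∂μ, Tendsto (fun n => (α n ω)⁻¹ • Smat S Φ n ω) atTop (𝓝 L))
    (hlog : ∀ᵐ ω ∂μ, (fun n => Real.log ((Smat S Φ n ω).det)) =o[atTop]
      fun n : ℕ => (n : ℝ) ^ c) :
    ∀ᵐ ω ∂μ, (fun n : ℕ => |(∑ k ∈ range n,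
        (X (k + 1) ω - lsq S Φ X k ω ⬝ᵥ Φ k ω) ^ (2 * q)) / n - σ2q| ^ 2) =o[atTop]
      fun n : ℕ => (n : ℝ) ^ (c - 1) := by
  obtain ⟨q, rfl⟩ := Nat.exists_eq_add_of_le' hq
  push_cast at ha hc1
  have := NeZero.of_pos hd
  have ha0 : 0 < a := lt_trans (by positivity) ha
  have hc0 : 0 < c := lt_trans (by positivity) hc1
  have hca : 1 < c * (a / (2 * ((q : ℝ) + 1))) := by
    rwa [← mul_div_assoc, one_lt_div (by positivity), ← div_lt_iff₀ ha0]
  have he : HasBddCondMoment F μ (fun n => ε (n + 1)) a := ⟨fun n => hεadapt (n + 1), hmomint, hmom⟩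
  have hgain : ∀ᵐ ω ∂μ, (fun n => ∑ k ∈ range n, informationGain S Φ k ω) =o[atTop]
      fun n : ℕ => (n : ℝ) ^ c := by
    filter_upwards [hconv, hlog] with ω hω hlogω
    exact isLittleO_sum_informationGain hS hL (hαpos · ω) hω hc0 hlogω
  have hprediction : ∀ᵐ ω ∂μ, ∃ B, 0 ≤ B ∧ ∀ᶠ k in atTop,
      ((θ - lsq S Φ X k ω) ⬝ᵥ Φ k ω) ^ 2 ≤
        B * (informationGain S Φ k ω * errorEnergy S θ Φ (fun n => ε (n + 1)) k ω) := by
    filter_upwards [hconv, hf0] with ω hω hf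
    exact exists_eventually_prediction_sq_le hS hL (hαpos · ω) hω hf (hmodel · ω)
  have hrec := energyRecursion_errorEnergy (θ := θ) hS hΦadapt he.stronglyMeasurable
  filter_upwards [hrec.isLittleO_sum_add_pow_sub_condExp he hmds hc0 hc2 hca
      (by simp [errorEnergy, weightedError, informationTrace]) hgain hprediction,
    ae_all_iff.2 hmom2q] with ω hω hmean
  refine isLittleO_sq_div_sub_of_isLittleO (hω.congr_left fun n => ?_)
  simp only [hmean, sum_sub_distrib, sum_const, card_range, nsmul_eq_mul, hmodel, sub_dotProduct,
    sub_add_eq_add_sub]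

/-- If moreover `log d_n = o(n^c)` a.s. with `2p/a < c < 1`, then the cumulative
prediction error satisfies `|C_n(q)/n - σ(2q)|² = o(n^{c-1})` a.s. -/
theorem cumulative_prediction_error_rate
    {Ω : Type*} {m0 : MeasurableSpace Ω} {μ : Measure Ω} [IsProbabilityMeasure μ]
    (F : Filtration ℕ m0) {d : ℕ} (hd : 0 < d)
    (ε : ℕ → Ω → ℝ) (Φ : ℕ → Ω → Fin d → ℝ) (X : ℕ → Ω → ℝ) (θ : Fin d → ℝ)
    (S L : Matrix (Fin d) (Fin d) ℝ) (hS : S.PosDef) (hL : L.PosDef)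
    (σ : ℝ) (p : ℕ) (hp : 1 ≤ p) (a : ℝ) (ha : 2 * p < a)
    (q : ℕ) (hq1 : 1 ≤ q) (hqp : q ≤ p) (σ2q : ℝ)
    (c : ℝ) (hc1 : 2 * p / a < c) (hc2 : c < 1)
    (α : ℕ → Ω → ℝ)
    (hmodel : ∀ n ω, X (n + 1) ω = θ ⬝ᵥ Φ n ω + ε (n + 1) ω)
    (hεadapt : ∀ n, StronglyMeasurable[F n] (ε n))
    (hεint : ∀ n, Integrable (ε n) μ)
    (hΦadapt : ∀ n, StronglyMeasurable[F n] (Φ n))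
    (hXadapt : ∀ n, StronglyMeasurable[F n] (X n))
    (hmds : ∀ n, μ[ε (n + 1)|F n] =ᵐ[μ] 0)
    (hvar : ∀ n, μ[fun ω => ε (n + 1) ω ^ 2|F n] =ᵐ[μ] fun _ => σ ^ 2)
    (hmomint : ∀ n, Integrable (fun ω => |ε (n + 1) ω| ^ a) μ)
    (hmom : ∀ᵐ ω ∂μ, ∃ C : ℝ, ∀ n, (μ[fun ω => |ε (n + 1) ω| ^ a|F n]) ω ≤ C)
    (hmom2q : ∀ n, μ[fun ω => ε (n + 1) ω ^ (2 * q)|F n] =ᵐ[μ] fun _ => σ2q)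
    (hf0 : ∀ᵐ ω ∂μ, Tendsto (fun n => expl S Φ n ω) atTop (𝓝 0))
    (hαmeas : ∀ n, Measurable (α n))
    (hαpos : ∀ n ω, 0 < α n ω)
    (hαmono : ∀ᵐ ω ∂μ, Monotone fun n => α n ω)
    (hαtop : ∀ᵐ ω ∂μ, Tendsto (fun n => α n ω) atTop atTop)
    (hconv : ∀ᵐ ω ∂μ, Tendsto (fun n => (α n ω)⁻¹ • Smat S Φ n ω) atTop (𝓝 L))
    (hlog : ∀ᵐ ω ∂μ, (fun n => Real.log ((Smat S Φ n ω).det)) =o[atTop]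
      fun n : ℕ => (n : ℝ) ^ c) :
    let C : ℕ → Ω → ℝ := fun n ω =>
      ∑ k ∈ Finset.range n, (X (k + 1) ω - lsq S Φ X k ω ⬝ᵥ Φ k ω) ^ (2 * q)
    ∀ᵐ ω ∂μ, (fun n : ℕ => |C n ω / n - σ2q| ^ 2) =o[atTop]
      fun n : ℕ => (n : ℝ) ^ (c - 1) := by
  intro C
  have hqp' : (q : ℝ) ≤ p := Nat.cast_le.2 hqp
  have ha0 : 0 < a := lt_of_le_of_lt (by positivity) ha
  exact cumulative_prediction_error_rate_general F hd ε Φ X θ S L hS hL q hq1 a (by linarith) σ2q c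
    (lt_of_le_of_lt (by gcongr) hc1) hc2 α hmodel hεadapt hΦadapt hmds hmomint hmom hmom2q hf0
    hαpos hconv hlog
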